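/- arXiv:1603.01710 — 5 statements merged into one kernel-verified Lean document; each statement's English description precedes it below -/
import Mathlib

section
/- The assignment a |-> (1 2), b |-> (2 3), c |-> (3 4), d |-> 1, e |-> 1, f |-> 1 extends to a well-defined group homomorphism psi from Theta to the symmetric group S_4 = Equiv.Perm (Fin 4) (i.e. these permutations satisfy all defining relations of Theta), and psi is surjective. -/
/-- Coxeter matrix of the string diagram [3,3,4,3,3] on generators a,b,c,d,e,f = 0..5. -/
def cox6 : Fin 6 → Fin 6 → ℕ := fun i j =>
  if i = j then 1
  else if (i : ℕ) + 1 = (j : ℕ) ∨ (j : ℕ) + 1 = (i : ℕ) then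
    (if ((i : ℕ) = 2 ∧ (j : ℕ) = 3) ∨ ((i : ℕ) = 3 ∧ (j : ℕ) = 2) then 4 else 3)
  else 2

def rels6 : Set (FreeGroup (Fin 6)) :=
  Set.range fun p : Fin 6 × Fin 6 => (FreeGroup.of p.1 * FreeGroup.of p.2) ^ cox6 p.1 p.2

/-- The Coxeter group of type [3,3,4,3,3]. -/
abbrev W : Type := PresentedGroup rels6

/-- The generators a,b,c,d,e,f of W, as w 0, ..., w 5. -/
def w (i : Fin 6) : W := PresentedGroup.of i

/-- sigma = d^(cb) = b*c*d*c*b. -/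
def sg : W := w 1 * w 2 * w 3 * w 2 * w 1
/-- tau = c^(de) = e*d*c*d*e. -/
def tu : W := w 4 * w 3 * w 2 * w 3 * w 4

/-- Theta: the quotient of W by the normal closure of (a σ τ)^4 and (f τ σ τ)^3. -/
abbrev Theta : Type :=
  W ⧸ Subgroup.normalClosure ({(w 0 * sg * tu) ^ 4, (w 5 * tu * sg * tu) ^ 3} : Set W)

/-- Images of the six generators in Theta. -/
def th (i : Fin 6) : Theta := QuotientGroup.mk (w i)

/-- Images of the six generators in S_4. -/
def gen6 : Fin 6 → Equiv.Perm (Fin 4) :=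
  ![Equiv.swap 0 1, Equiv.swap 1 2, Equiv.swap 2 3, 1, 1, 1]

theorem gen6_rel : ∀ i j : Fin 6, (gen6 i * gen6 j) ^ cox6 i j = 1 := by
  decide

/-- The homomorphism on the Coxeter group. -/
def psiW : W →* Equiv.Perm (Fin 4) :=
  PresentedGroup.toGroup (f := gen6) (rels := rels6) (by
    rintro _ ⟨⟨i, j⟩, rfl⟩
    simpa using gen6_rel i j)

/-- The assignment a ↦ (1 2), b ↦ (2 3), c ↦ (3 4), d,e,f ↦ 1 extends to a
well-defined surjective homomorphism psi : Theta → S_4. -/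
theorem stmt_7 :
    ∃ ψ : Theta →* Equiv.Perm (Fin 4),
      ψ (th 0) = Equiv.swap 0 1 ∧ ψ (th 1) = Equiv.swap 1 2 ∧ ψ (th 2) = Equiv.swap 2 3 ∧
      ψ (th 3) = 1 ∧ ψ (th 4) = 1 ∧ ψ (th 5) = 1 ∧ Function.Surjective ψ := by
  have h1 : ∀ i, psiW (w i) = gen6 i := fun i => PresentedGroup.toGroup.of _
  have hs : psiW sg = 1 := by
    simp only [sg, map_mul, h1]
    decide
  have ht : psiW tu = Equiv.swap 2 3 := by
    simp only [tu, map_mul, h1]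
    decide
  have hN : Subgroup.normalClosure
      ({(w 0 * sg * tu) ^ 4, (w 5 * tu * sg * tu) ^ 3} : Set W) ≤ psiW.ker := by
    apply Subgroup.normalClosure_le_normal
    rintro x (rfl | rfl)
    · simp only [SetLike.mem_coe, MonoidHom.mem_ker, map_mul, map_pow, hs, ht, h1]
      decide
    · simp only [SetLike.mem_coe, MonoidHom.mem_ker, map_mul, map_pow, hs, ht, h1]
      decide
  let ψ : Theta →* Equiv.Perm (Fin 4) := QuotientGroup.lift _ psiW hN
  have hψ : ∀ i, ψ (th i) = gen6 i := fun i => h1 i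
  refine ⟨ψ, hψ 0, hψ 1, hψ 2, hψ 3, hψ 4, hψ 5, ?_⟩
  rw [← MonoidHom.mrange_eq_top, eq_top_iff, ← Equiv.Perm.mclosure_swap_castSucc_succ 3,
    Submonoid.closure_le]
  rintro _ ⟨i, rfl⟩
  fin_cases i
  · exact ⟨th 0, hψ 0⟩
  · exact ⟨th 1, hψ 1⟩
  · exact ⟨th 2, hψ 2⟩
end

section
/- The quotient group Theta' is finite, of order 2^18 * 3^2 (= 2359296). (Theta' is the automorphism group of the universal locally toroidal polytope {{3,3,4,3}_{(2,0,0,0)}, {3,4,3,3}_{(2,2,0,0)}}.) -/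
/-- Theta': the quotient of W by the normal closure of (a σ τ σ)^2,
forcing facets {3,3,4,3}_{(2,0,0,0)}. -/
abbrev Theta' : Type :=
  W ⧸ Subgroup.normalClosure ({(w 0 * sg * tu * sg) ^ 2} : Set W)

/-- Images of the six generators in Theta'. -/
def th' (i : Fin 6) : Theta' := QuotientGroup.mk (w i)

namespace Theta9

/-! ### A small verified coset-enumeration checker -/

/-- Table lookup: entry `(i, s)` of a table with six columns packed in 7-bit fields. -/
def look (T i s : ℕ) : ℕ := (T >>> (7 * (6 * i + s))) % 128

/-- Trace a word through the table, using known edges only. -/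
def run (T K : ℕ) : List ℕ → ℕ → Option ℕ
  | [], p => some p
  | s :: l, p => bif K.testBit (6 * p + s) then run T K l (look T p s) else none

/-- Record the edge `(i, s)` together with its reverse. -/
def addEdge (T K i s : ℕ) : ℕ :=
  (K ||| (1 <<< (6 * i + s))) ||| (1 <<< (6 * look T i s + s))

/-- The defining relators. -/
def relW : List (List ℕ) :=
  [[0,1,0,1,0,1], [0,2,0,2], [0,3,0,3], [0,4,0,4], [0,5,0,5],
   [1,2,1,2,1,2], [1,3,1,3], [1,4,1,4], [1,5,1,5],
   [2,3,2,3,2,3,2,3], [2,4,2,4], [2,5,2,5],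
   [3,4,3,4,3,4], [3,5,3,5], [4,5,4,5,4,5],
   [0,1,2,3,2,1,4,3,2,3,4,1,2,3,2,1,0,1,2,3,2,1,4,3,2,3,4,1,2,3,2,1]]

/-- One deduction: at the point `p`, scan the `k`-th relator rotated by `r`;
all edges but the first must be known. -/
def dedStep (T K p k r : ℕ) : ℕ :=
  match (relW.getD k []).rotate r with
  | [] => K
  | s :: l =>
    bif (s.blt 6 && (look T (look T p s) s).beq p
      && (run T K l (look T p s) == some p)) then addEdge T K p s else K

/-- One definition: the point `j` was defined from the point `p` by the generator `s`. -/
def defStep (T : ℕ) (D : List ℕ) (K j : ℕ) : ℕ :=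
  bif (((D.getD j 0) / 8).blt j && ((D.getD j 0) % 8).blt 6
    && (look T ((D.getD j 0) / 8) ((D.getD j 0) % 8)).beq j
    && (look T j ((D.getD j 0) % 8)).beq ((D.getD j 0) / 8))
  then addEdge T K ((D.getD j 0) / 8) ((D.getD j 0) % 8) else K

/-- A generator of the subgroup fixes the point `0`. -/
def subStep (T K s : ℕ) : ℕ := bif (look T 0 s).beq 0 then addEdge T K 0 s else K

/-- The known edges after the whole enumeration. -/
def known (T : ℕ) (D S0 I : List ℕ) : ℕ :=
  I.foldl (fun K c => dedStep T K (c / 1000) (c % 1000 / 50) (c % 50))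
    ((List.range D.length).foldl (defStep T D) (S0.foldl (subStep T) 0))

/-- The table is complete for the generators in `S`. -/
def complete (T K n : ℕ) (S : List ℕ) : Bool :=
  (List.range n).all fun i => S.all fun s => K.testBit (6 * i + s) && (look T i s).blt n

/-- The whole check. -/
def check (T n : ℕ) (D S S0 I : List ℕ) : Bool :=
  S.all (fun s => s.blt 6) && S0.all (fun s => s.blt 6) &&
    complete T (known T D S0 I) n S

section sound

variable {G : Type*} [Group G] (g : ℕ → G) {X : Type*} [MulAction G X]

/-- Apply the letters of a word one after the other. -/
def wact : List ℕ → X → X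
  | [], y => y
  | s :: l, y => wact l (g s • y)

theorem wact_eq (l : List ℕ) (y : X) :
    wact g l y = ((l.map g).reverse.prod) • y := by
  induction l generalizing y with
  | nil => simp [wact]
  | cons s l ih => simp [wact, ih, mul_smul]

theorem reverse_prod (hg : ∀ s, g s * g s = 1) (l : List ℕ) :
    (l.map g).reverse.prod = ((l.map g).prod)⁻¹ := by
  induction l with
  | nil => simp
  | cons s l ih =>
    have : (g s)⁻¹ = g s := inv_eq_of_mul_eq_one_left (hg s)
    simp [ih, this]

/-- The invariant: all recorded edges are valid. -/
def Inv (T : ℕ) (x : ℕ → X) (K : ℕ) : Prop :=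
  ∀ i s, s < 6 → K.testBit (6 * i + s) = true → g s • x i = x (look T i s)

variable {g}

theorem inv_addEdge (hg : ∀ s, g s * g s = 1) {T K : ℕ} {x : ℕ → X} (h : Inv g T x K)
    {i s : ℕ} (hs : s < 6) (hb : look T (look T i s) s = i)
    (he : g s • x i = x (look T i s)) : Inv g T x (addEdge T K i s) := by
  intro i' s' hs' ht
  have key : K.testBit (6 * i' + s') = true ∨ (i' = i ∧ s' = s) ∨ (i' = look T i s ∧ s' = s) := by
    simp only [addEdge, Nat.testBit_or, Nat.one_shiftLeft, Nat.testBit_two_pow, Bool.or_eq_true,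
      decide_eq_true_eq] at ht
    rcases ht with (ht | ht) | ht
    · exact Or.inl ht
    · right; left; omega
    · right; right; omega
  rcases key with h1 | ⟨rfl, rfl⟩ | ⟨rfl, rfl⟩
  · exact h i' s' hs' h1
  · exact he
  · rw [hb, ← he, ← mul_smul, hg, one_smul]

theorem run_sound {T K : ℕ} {x : ℕ → X} (h : Inv g T x K) (l : List ℕ) (hl : ∀ s ∈ l, s < 6)
    (p q : ℕ) (hr : run T K l p = some q) : wact g l (x p) = x q := by
  induction l generalizing p with
  | nil => simp only [run, Option.some.injEq] at hr; simp [wact, hr]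
  | cons s l ih =>
    rw [run] at hr
    cases hK : K.testBit (6 * p + s) with
    | false => rw [hK] at hr; simp at hr
    | true =>
      rw [hK] at hr
      rw [wact, h p s (hl s (by simp)) hK]
      exact ih (fun t ht => hl t (by simp [ht])) _ hr

theorem relW_lt (k : ℕ) : ∀ s ∈ relW.getD k [], s < 6 := by
  have h : ∀ l ∈ relW, ∀ s ∈ l, s < 6 := by decide
  by_cases hk : k < relW.length
  · rw [List.getD_eq_getElem _ _ hk]; exact h _ (List.getElem_mem hk)
  · rw [List.getD_eq_default _ _ (by omega)]; simp

theorem relW_prod (hrel : ∀ l ∈ relW, (l.map g).prod = 1) (k : ℕ) :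
    ((relW.getD k []).map g).prod = 1 := by
  by_cases hk : k < relW.length
  · rw [List.getD_eq_getElem _ _ hk]; exact hrel _ (List.getElem_mem hk)
  · rw [List.getD_eq_default _ _ (by omega)]; simp

theorem inv_dedStep (hg : ∀ s, g s * g s = 1) (hrel : ∀ l ∈ relW, (l.map g).prod = 1)
    {T K : ℕ} {x : ℕ → X} (h : Inv g T x K) (p k r : ℕ) :
    Inv g T x (dedStep T K p k r) := by
  unfold dedStep
  have h1 : (((relW.getD k []).rotate r).map g).prod = 1 := by
    rw [List.map_rotate]
    exact List.prod_rotate_eq_one_of_prod_eq_one (relW_prod hrel k) r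
  have h2 : ∀ s ∈ (relW.getD k []).rotate r, s < 6 := by
    intro s hs
    exact relW_lt k s (List.mem_rotate.mp hs)
  generalize (relW.getD k []).rotate r = w at h1 h2
  cases w with
  | nil => exact h
  | cons s l =>
    simp only
    cases hc : (s.blt 6 && (look T (look T p s) s).beq p
      && (run T K l (look T p s) == some p)) with
    | false => exact h
    | true =>
      simp only [Bool.and_eq_true, beq_iff_eq] at hc
      obtain ⟨⟨hc1, hc2⟩, hc3⟩ := hc
      refine inv_addEdge hg h (h2 s (by simp)) (Nat.eq_of_beq_eq_true hc2) ?_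
      have e1 := run_sound h l (fun t ht => h2 t (by simp [ht])) _ _ hc3
      have e2 : wact g (s :: l) (x p) = x p := by
        rw [wact_eq, reverse_prod g hg, h1]; simp
      rw [wact, wact_eq] at e2
      rw [wact_eq] at e1
      exact MulAction.injective _ (e2.trans e1.symm)

variable (g) in
/-- The points of the enumeration. -/
def pt (D : List ℕ) (x0 : X) (j : ℕ) : X :=
  if _h : (D.getD j 0) / 8 < j then g ((D.getD j 0) % 8) • pt D x0 ((D.getD j 0) / 8) else x0
termination_by j

theorem inv_defStep (hg : ∀ s, g s * g s = 1) {T K : ℕ} (D : List ℕ) (x0 : X)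
    (h : Inv g T (pt g D x0) K) (j : ℕ) : Inv g T (pt g D x0) (defStep T D K j) := by
  unfold defStep
  cases hc : (((D.getD j 0) / 8).blt j && ((D.getD j 0) % 8).blt 6
    && (look T ((D.getD j 0) / 8) ((D.getD j 0) % 8)).beq j
    && (look T j ((D.getD j 0) % 8)).beq ((D.getD j 0) / 8)) with
  | false => exact h
  | true =>
    simp only [Bool.and_eq_true] at hc
    obtain ⟨⟨⟨hc1, hc2⟩, hc3⟩, hc4⟩ := hc
    have hc1 : (D.getD j 0) / 8 < j := Nat.le_of_ble_eq_true hc1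
    have hc2 : (D.getD j 0) % 8 < 6 := Nat.le_of_ble_eq_true hc2
    have hc3 := Nat.eq_of_beq_eq_true hc3
    have hc4 := Nat.eq_of_beq_eq_true hc4
    refine inv_addEdge hg h hc2 (by rw [hc3, hc4]) ?_
    rw [hc3]
    conv_rhs => rw [pt]
    rw [dif_pos hc1]

theorem pt_zero (D : List ℕ) (x0 : X) : pt g D x0 0 = x0 := by
  rw [pt]; simp

theorem inv_subStep (hg : ∀ s, g s * g s = 1) {T K : ℕ} (D : List ℕ) (x0 : X)
    (h : Inv g T (pt g D x0) K) (s : ℕ) (hs : s < 6) (hx : g s • x0 = x0) :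
    Inv g T (pt g D x0) (subStep T K s) := by
  unfold subStep
  cases hc : (look T 0 s).beq 0 with
  | false => exact h
  | true =>
    have hc := Nat.eq_of_beq_eq_true hc
    refine inv_addEdge hg h hs (by rw [hc, hc]) ?_
    rw [hc, pt_zero, hx]

theorem foldl_inv {α β : Type*} (P : α → Prop) (f : α → β → α) (l : List β)
    (hf : ∀ a, ∀ b ∈ l, P a → P (f a b)) (a : α) (ha : P a) : P (l.foldl f a) := by
  induction l generalizing a with
  | nil => exact ha
  | cons b l ih =>
    exact ih (fun a c hc => hf a c (by simp [hc])) _ (hf a b (by simp) ha)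

theorem inv_known (hg : ∀ s, g s * g s = 1) (hrel : ∀ l ∈ relW, (l.map g).prod = 1)
    (T : ℕ) (D S0 I : List ℕ) (x0 : X) (hS0 : ∀ s ∈ S0, s < 6) (hx : ∀ s ∈ S0, g s • x0 = x0) :
    Inv g T (pt g D x0) (known T D S0 I) := by
  unfold known
  refine foldl_inv (Inv g T (pt g D x0)) _ _ (fun K c _ h => inv_dedStep hg hrel h _ _ _) _ ?_
  refine foldl_inv (Inv g T (pt g D x0)) _ _ (fun K c _ h => inv_defStep hg D x0 h _) _ ?_
  refine foldl_inv (Inv g T (pt g D x0)) _ _ (fun K c hc h => inv_subStep hg D x0 h _ (hS0 c hc) (hx c hc)) _ ?_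
  intro i s _ h
  simp at h

variable (g) in
/-- The subgroup generated by the listed generators. -/
def gen (S : List ℕ) : Subgroup G := Subgroup.closure (g '' {s | s ∈ S})

theorem relIndex_le (hg : ∀ s, g s * g s = 1) (hrel : ∀ l ∈ relW, (l.map g).prod = 1)
    (T n : ℕ) (D S S0 I : List ℕ) (hn : 0 < n) (hc : check T n D S S0 I = true) :
    (gen g S0).relIndex (gen g S) ≠ 0 ∧ (gen g S0).relIndex (gen g S) ≤ n := by
  simp only [check, complete, Bool.and_eq_true, List.all_eq_true] at hc
  obtain ⟨⟨hS, hS0⟩, hcomp⟩ := hc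
  have hS : ∀ s ∈ S, s < 6 := fun s hs => Nat.le_of_ble_eq_true (hS s hs)
  have hS0 : ∀ s ∈ S0, s < 6 := fun s hs => Nat.le_of_ble_eq_true (hS0 s hs)
  let x0 : G ⧸ gen g S0 := ((1 : G) : G ⧸ gen g S0)
  have hx : ∀ s ∈ S0, g s • x0 = x0 := by
    intro s hs
    change ((g s * 1 : G) : G ⧸ gen g S0) = ((1 : G) : G ⧸ gen g S0)
    rw [QuotientGroup.eq]
    have : g s ∈ gen g S0 := Subgroup.subset_closure ⟨s, hs, rfl⟩
    simpa using this
  have hinv := inv_known hg hrel T D S0 I x0 hS0 hx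
  let P : Set (G ⧸ gen g S0) := (pt g D x0) '' (Finset.range n : Set ℕ)
  have hP : ∀ h ∈ gen g S, ∀ y ∈ P, h • y ∈ P := by
    intro h hh
    induction hh using Subgroup.closure_induction'' with
    | one => intro y hy; simpa using hy
    | mem h hh =>
      obtain ⟨s, hs, rfl⟩ := hh
      rintro _ ⟨i, hi, rfl⟩
      have := hcomp i (by simpa using hi) s hs
      rw [hinv i s (hS s hs) this.1]
      exact ⟨_, by simpa using Nat.le_of_ble_eq_true this.2, rfl⟩
    | inv_mem h hh =>
      obtain ⟨s, hs, rfl⟩ := hh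
      have hi : (g s)⁻¹ = g s := inv_eq_of_mul_eq_one_left (hg s)
      rw [hi]
      rintro _ ⟨i, hi, rfl⟩
      have := hcomp i (by simpa using hi) s hs
      rw [hinv i s (hS s hs) this.1]
      exact ⟨_, by simpa using Nat.le_of_ble_eq_true this.2, rfl⟩
    | mul a b _ _ ha hb =>
      intro y hy
      rw [mul_smul]
      exact ha _ (hb _ hy)
  have hstab : MulAction.stabilizer (gen g S) x0 = (gen g S0).subgroupOf (gen g S) := by
    ext h
    rw [MulAction.mem_stabilizer_iff, Subgroup.mem_subgroupOf]
    change (((h : G) * 1 : G) : G ⧸ gen g S0) = ((1 : G) : G ⧸ gen g S0) ↔ _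
    rw [QuotientGroup.eq]
    simp
  have hidx : (gen g S0).relIndex (gen g S) = (MulAction.orbit (gen g S) x0).ncard := by
    rw [Subgroup.relIndex, ← hstab, MulAction.index_stabilizer]
  have hsub : MulAction.orbit (gen g S) x0 ⊆ P := by
    rintro _ ⟨h, rfl⟩
    refine hP h.1 h.2 x0 ⟨0, by simpa using hn, pt_zero D x0⟩
  have hfin : P.Finite := (Finset.finite_toSet _).image _
  have hcard : P.ncard ≤ n := by
    refine (Set.ncard_image_le (Finset.finite_toSet _)).trans ?_
    simp
  rw [hidx]
  refine ⟨?_, (Set.ncard_le_ncard hsub hfin).trans hcard⟩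
  have : (MulAction.orbit (gen g S) x0).ncard ≠ 0 := by
    exact ((Set.ncard_pos (hfin.subset hsub)).mpr (MulAction.nonempty_orbit x0)).ne'
  exact this

end sound

/-! ### The generators of `Theta'` and their relations -/

/-- The generators of `Theta'`, indexed by natural numbers. -/
def gN (n : ℕ) : Theta' := th' (Fin.ofNat 6 n)

theorem th_rel (i j : Fin 6) : (th' i * th' j) ^ cox6 i j = 1 := by
  have h : (w i * w j) ^ cox6 i j = 1 := by
    have : (PresentedGroup.mk rels6) ((FreeGroup.of i * FreeGroup.of j) ^ cox6 i j) = 1 :=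
      PresentedGroup.one_of_mem ⟨(i, j), rfl⟩
    rw [map_pow, map_mul] at this
    exact this
  have h2 := congrArg (QuotientGroup.mk' (Subgroup.normalClosure
    ({(w 0 * sg * tu * sg) ^ 2} : Set W))) h
  rw [map_pow, map_mul, map_one] at h2
  exact h2

theorem gN_sq (n : ℕ) : gN n * gN n = 1 := by
  have := th_rel (Fin.ofNat 6 n) (Fin.ofNat 6 n)
  rw [cox6, if_pos rfl, pow_one] at this
  exact this

theorem th_big : ([0,1,2,3,2,1,4,3,2,3,4,1,2,3,2,1,0,1,2,3,2,1,4,3,2,3,4,1,2,3,2,1].map gN).prod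
    = 1 := by
  have h : QuotientGroup.mk' (Subgroup.normalClosure ({(w 0 * sg * tu * sg) ^ 2} : Set W))
      ((w 0 * sg * tu * sg) ^ 2) = 1 := by
    rw [QuotientGroup.mk'_apply, QuotientGroup.eq_one_iff]
    exact Subgroup.subset_normalClosure rfl
  rw [← h]
  simp only [sg, tu, pow_two, List.map_cons, List.map_nil, List.prod_cons, List.prod_nil,
    mul_one, mul_assoc]
  rfl

theorem gN_rel : ∀ l ∈ relW, (l.map gN).prod = 1 := by
  have h := th_rel
  have key : ∀ i j : ℕ, (gN i * gN j) ^ cox6 (Fin.ofNat 6 i) (Fin.ofNat 6 j) = 1 :=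
    fun i j => h _ _
  intro l hl
  simp only [relW, List.mem_cons, List.not_mem_nil, or_false] at hl
  rcases hl with rfl | rfl | rfl | rfl | rfl | rfl | rfl | rfl | rfl | rfl | rfl | rfl | rfl |
    rfl | rfl | rfl
  · exact (show _ = (gN 0 * gN 1) ^ 3 by simp [pow_succ, mul_assoc]).trans (key 0 1)
  · exact (show _ = (gN 0 * gN 2) ^ 2 by simp [pow_succ, mul_assoc]).trans (key 0 2)
  · exact (show _ = (gN 0 * gN 3) ^ 2 by simp [pow_succ, mul_assoc]).trans (key 0 3)
  · exact (show _ = (gN 0 * gN 4) ^ 2 by simp [pow_succ, mul_assoc]).trans (key 0 4)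
  · exact (show _ = (gN 0 * gN 5) ^ 2 by simp [pow_succ, mul_assoc]).trans (key 0 5)
  · exact (show _ = (gN 1 * gN 2) ^ 3 by simp [pow_succ, mul_assoc]).trans (key 1 2)
  · exact (show _ = (gN 1 * gN 3) ^ 2 by simp [pow_succ, mul_assoc]).trans (key 1 3)
  · exact (show _ = (gN 1 * gN 4) ^ 2 by simp [pow_succ, mul_assoc]).trans (key 1 4)
  · exact (show _ = (gN 1 * gN 5) ^ 2 by simp [pow_succ, mul_assoc]).trans (key 1 5)
  · exact (show _ = (gN 2 * gN 3) ^ 4 by simp [pow_succ, mul_assoc]).trans (key 2 3)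
  · exact (show _ = (gN 2 * gN 4) ^ 2 by simp [pow_succ, mul_assoc]).trans (key 2 4)
  · exact (show _ = (gN 2 * gN 5) ^ 2 by simp [pow_succ, mul_assoc]).trans (key 2 5)
  · exact (show _ = (gN 3 * gN 4) ^ 3 by simp [pow_succ, mul_assoc]).trans (key 3 4)
  · exact (show _ = (gN 3 * gN 5) ^ 2 by simp [pow_succ, mul_assoc]).trans (key 3 5)
  · exact (show _ = (gN 4 * gN 5) ^ 3 by simp [pow_succ, mul_assoc]).trans (key 4 5)
  · exact th_big

theorem gen_top : gen gN [0, 1, 2, 3, 4, 5] = ⊤ := by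
  have hw : Subgroup.closure (Set.range w) = ⊤ := PresentedGroup.closure_range_of rels6
  have h2 : Subgroup.closure (Set.range th') = ⊤ := by
    have := congrArg (Subgroup.map (QuotientGroup.mk' (Subgroup.normalClosure
      ({(w 0 * sg * tu * sg) ^ 2} : Set W)))) hw
    rw [MonoidHom.map_closure, ← Set.range_comp,
      Subgroup.map_top_of_surjective _ (QuotientGroup.mk'_surjective _)] at this
    exact this
  rw [eq_top_iff, ← h2]
  refine Subgroup.closure_mono ?_
  rintro _ ⟨i, rfl⟩
  refine ⟨i, ?_, ?_⟩
  · fin_cases i <;> simp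
  · simp [gN]

theorem gen_nil : gen gN [] = ⊥ := by simp [gen]

theorem gen_mono {S S' : List ℕ} (h : S ⊆ S') : gen gN S ≤ gen gN S' :=
  Subgroup.closure_mono (Set.image_mono h)

/-- Coset table, level 0. -/
def T0 : ℕ :=
  2157001468986570453224426432158286182867945961160312359682441484004360226792187353183476503361332538147311051820802361956796897870354849128830930913503826618341758446767500247310077950995393825802866178306484148711942107465955377316021290771386601992116382691410012440064578770958533420582630599621676176530145674132364987509511028126037983998567811305906386041723073217897619818869333416560093636620112013071040414885139915516486107512731097226498602862157529015042609102769095610558067606811711757414447798721810661228251721941077441034319757653942539513937446063715777557274167255826190768316373157524954917419693069249429446720894328029050024121111817886516107716671008584919152586056310362636103680948666640242741316573162418813948835535121292531922541461378791955682226908551060112376717040729299500000589224062414348332022609218524522484365079810884681168477580838700712780240578266568246594286819754792270736834928464024202058415182912195199340405889315008024083290894690856792706299832213368221790449590250951722090997514128146271960359473099847349262476996966639738037066201050096219519969411564304728459783175480031820329301538696084658975893666157862095445087184138620308128075087676133736784459436372340393043884521642558893338972611221312525682741016574053110689569960581839703553272947149914549955220246297885396655048962179958082291945010447849342262308870101196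3119815237352930222575257451948428500041369801521798089511115523470692275829686862494889301041355755309779515199846181503600810556777328668935464490821925997235292606133495125836196351469726828581700674089529527292675091946337207388959932416

/-- Definitions, level 0. -/
def D0 : List ℕ := [
  0, 5, 12, 19, 26, 33, 35, 40, 43, 52, 59, 66, 68, 77, 82, 84, 91, 92, 101, 113, 115, 116, 125,
  132, 139, 141, 155, 156, 164, 171, 173, 187, 189, 194, 197, 210, 212, 219, 221, 227, 229, 234,
  237, 250, 253, 265, 269, 276, 283, 284, 291, 293, 301, 314, 317, 333, 340, 345, 347, 349, 356,
  365, 372, 388, 395, 397, 405, 420, 427, 429, 436, 444, 459, 461, 469, 476, 492, 499, 507, 509,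
  517, 532, 549, 556, 571, 578, 581, 588, 596, 603, 611, 618, 629, 644, 660, 667, 674, 683, 685,
  692, 699, 707, 714, 740, 755, 762, 769, 780, 781, 788, 795, 810, 834, 841, 861, 868, 875, 891,
  897, 899, 916, 923, 947, 963, 978, 995, 1004, 1013]

/-- Deductions, level 0. -/
def I0 : List ℕ := [
  1200, 1400, 1550, 1650, 2150, 2350, 2500, 2701, 3100, 3300, 3601, 3651, 4050, 4501, 4551, 5251,
  5351, 5401, 6100, 6450, 6651, 7001, 7051, 7151, 7201, 6300, 8401, 9150, 9500, 9600, 8100,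
  10201, 10300, 11250, 11551, 9350, 12600, 13200, 13550, 13650, 13700, 11050, 14201, 12150,
  15350, 15600, 16300, 16450, 16651, 17350, 12500, 13400, 18650, 18700, 19000, 19251, 19401,
  16100, 20201, 20450, 17150, 15500, 18200, 22400, 22650, 22700, 23350, 23500, 24300, 25400,
  18550, 25700, 26100, 20300, 26401, 27150, 21350, 27500, 23150, 28500, 24100, 25200, 22550,
  30700, 31300, 24601, 32400, 32550, 32700, 33451, 34400, 25650, 35050, 35250, 35551, 36150,
  28350, 37100, 29300, 37758, 38200, 30400, 38550, 38700, 31100, 29151, 32200, 40550, 40700,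
  33050, 41101, 41250, 34200, 30650, 33501, 44400, 32650, 45000, 45251, 45301, 34550, 46650,
  47350, 47600, 48100, 48300, 48450, 48651, 49150, 49350, 36500, 50100, 39300, 37351, 50500,
  51200, 40400, 51700, 52200, 42400, 52550, 38650, 43050, 41151, 53250, 44200, 40650, 46200,
  55400, 42550, 55650, 47150, 56600, 57000, 57251, 45351, 58450, 58601, 44550, 60350, 60600,
  47701, 61200, 46400, 61550, 61650, 47500, 63150, 63350, 63500, 64100, 64300, 64450, 65200,
  65400, 51550, 65700, 66200, 54400, 66550, 51650, 67150, 56350, 67500, 67600, 58100, 68151,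
  68300, 68450, 59200, 69400, 54550, 60150, 56201, 70600, 62150, 71350, 56500, 72100, 58300,
  72351, 73200, 59400, 73550, 74550, 59650, 60500, 62551, 76150, 62350, 76500, 77601, 78100,
  78300, 64601, 78758, 79200, 79400, 79550, 79700, 80200, 80400, 80550, 65650, 81150, 70350,
  67401, 81500, 81600, 74200, 82400, 82550, 69650, 75150, 71201, 83350, 70500, 77100, 84151,
  84300, 85050, 85250, 85501, 86200, 74400, 73650, 87150, 75350, 76401, 87500, 88500, 88701,
  77651, 90100, 77300, 90351, 90754, 91250, 91451, 91501, 92200, 92400, 92550, 79650, 93150,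
  93350, 93500, 93600, 88150, 94201, 94350, 94500, 89100, 84201, 95300, 91050, 96101, 96151,
  97100, 97300, 97450, 98200, 98400, 86550, 99150, 88350, 99401, 100100, 89300, 90401, 100550,
  89601, 101651, 102250, 102451, 91551, 103150, 103350, 103500, 103600, 93701, 101100, 95151,
  104201, 104300, 102050, 105101, 96201, 106000, 106251, 106301, 106351, 107150, 107350, 107500,
  107600, 108200, 108400, 108550, 98650, 109150, 109350, 99500, 109551, 110100, 101300, 100351,
  110401, 110500, 111250, 102501, 111551, 111050, 105151, 112201, 113000, 113251, 113301, 106401,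
  114200, 114400, 114550, 114650, 115150, 115350, 115500, 116100, 116300, 116450, 116651, 117300,
  117450, 117601, 117651, 118000, 118251, 113351, 118401, 117100, 119151, 119201, 119450, 120150,
  120350, 120500, 115701, 121100, 121300, 116601, 121758, 122100, 119300, 122351, 122401, 123100,
  123300, 123601, 121651, 123550, 124050, 124250, 124501, 124551, 125100, 125300, 125450, 125651,
  126150, 126350, 126500, 126600, 127200, 127400, 127550, 127650, 127700]

/-- Coset table, level 1. -/
def T1 : ℕ :=
  18053476637857808117769068985405773422723202439308925109118109758612938538617627044124309449880873138140804623757743757255695588573699384968754907348692462851101245050930361718489165820107175994851329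

/-- Definitions, level 1. -/
def D1 : List ℕ := [
  0, 0, 9, 18, 27, 34, 36, 41, 44, 56, 60, 67, 76, 83, 90, 99]

/-- Deductions, level 1. -/
def I1 : List ℕ := [
  1051, 1101, 1151, 2000, 2301, 2351, 3050, 3250, 3501, 4100, 4300, 5050, 5451, 6150, 6350, 6600,
  7251, 7301, 8150, 6500, 9001, 9051, 9101, 8350, 10500, 11100, 11601, 10150, 12350, 12500,
  11300, 13351, 13758, 14050, 14250, 14451, 14501, 13100, 15151, 15300, 15758]

/-- Coset table, level 2. -/
def T2 : ℕ :=
  3713631563352514850292381352854262044017739643813309510954037916155017300728112970164179439935324372735701634678590103214719213899710050460962238066976719369476678008780191340976514888183229871801225718956633759802898564607925650031299967468754898076322719789192259005790275472209223453608078718533632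

/-- Definitions, level 2. -/
def D2 : List ℕ := [
  0, 4, 11, 18, 25, 27, 35, 44, 50, 52, 67, 68, 84, 91, 99, 106, 114, 121, 129, 131, 147, 162,
  171, 180]

/-- Deductions, level 2. -/
def I2 : List ℕ := [
  1350, 1500, 2300, 2601, 3501, 4251, 4351, 5450, 5300, 7500, 7600, 8250, 7350, 9600, 10300,
  10450, 11350, 9500, 12350, 12500, 13300, 14300, 13601, 15451, 15501, 17251, 17301, 18251,
  17351, 19450, 19601, 19300, 20351, 21250, 21501, 22300, 22450, 23350, 23500, 23600]

/-- Coset table, level 3. -/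
def T3 : ℕ :=
  404176456208537560439428166343943914058437998178796776656938450200641604207835862712725817786368

/-- Definitions, level 3. -/
def D3 : List ℕ := [
  0, 3, 10, 17, 19, 27, 42, 51]

/-- Deductions, level 3. -/
def I3 : List ℕ := [
  1300, 3251, 4450, 4300, 6250, 7300, 7450]

/-- Coset table, level 4. -/
def T4 : ℕ :=
  636301180192686587198056710144

/-- Definitions, level 4. -/
def D4 : List ℕ := [
  0, 2, 9]

/-- Deductions, level 4. -/
def I4 : List ℕ := [
  2251]

/-- Coset table, level 5. -/
def T5 : ℕ :=
  128

/-- Definitions, level 5. -/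
def D5 : List ℕ := [
  0, 1]

/-- Deductions, level 5. -/
def I5 : List ℕ := [
  ]

/-- Transversal words, level 0. -/
def ws0 : List ℕ := [
  0, 6, 56, 456, 3456, 23456, 43456, 123456, 423456, 543456, 4123456, 3423456, 5423456, 6543456,
  34123456, 54123456, 43423456, 53423456, 65423456, 234123456, 434123456, 534123456, 654123456,
  543423456, 453423456, 653423456, 4234123456, 5234123456, 5434123456, 4534123456, 6534123456,
  4543423456, 6543423456, 3453423456, 6453423456, 34234123456, 54234123456, 45234123456,
  65234123456, 45434123456, 65434123456, 34534123456, 64534123456, 34543423456, 64543423456,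
  23453423456, 63453423456, 56453423456, 434234123456, 534234123456, 454234123456, 654234123456,
  645234123456, 345434123456, 645434123456, 634534123456, 564534123456, 234543423456,
  434543423456, 634543423456, 564543423456, 623453423456, 563453423456, 5434234123456,
  4534234123456, 6534234123456, 6454234123456, 5645234123456, 4345434123456, 6345434123456,
  5645434123456, 5634534123456, 4234543423456, 6234543423456, 6434543423456, 5634543423456,
  5623453423456, 4563453423456, 45434234123456, 65434234123456, 64534234123456, 56454234123456,
  64345434123456, 56345434123456, 45634534123456, 34234543423456, 64234543423456, 56234543423456,
  56434543423456, 45634543423456, 45623453423456, 34563453423456, 645434234123456,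
  564534234123456, 564345434123456, 456345434123456, 345634534123456, 434234543423456,
  634234543423456, 564234543423456, 456234543423456, 456434543423456, 345634543423456,
  5645434234123456, 4564345434123456, 3456345434123456, 2345634534123456, 5434234543423456,
  6434234543423456, 5634234543423456, 4564234543423456, 3456434543423456, 34564345434123456,
  23456345434123456, 65434234543423456, 56434234543423456, 45634234543423456, 43456434543423456,
  234564345434123456, 434564345434123456, 565434234543423456, 456434234543423456,
  4234564345434123456, 4565434234543423456, 34234564345434123456, 434234564345434123456,
  5434234564345434123456, 65434234564345434123456]

/-- Transversal words, level 1. -/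
def ws1 : List ℕ := [
  0, 5, 45, 345, 2345, 4345, 12345, 42345, 54345, 412345, 342345, 542345, 3412345, 5412345,
  4342345, 5342345, 23412345, 43412345, 53412345, 54342345, 45342345, 423412345, 523412345,
  543412345, 453412345, 454342345, 345342345, 3423412345, 5423412345, 4523412345, 4543412345,
  3453412345, 3454342345, 2345342345, 43423412345, 53423412345, 45423412345, 34543412345,
  23454342345, 43454342345, 543423412345, 453423412345, 434543412345, 423454342345,
  4543423412345, 3423454342345, 43423454342345, 543423454342345]

/-- Transversal words, level 2. -/
def ws2 : List ℕ := [
  0, 4, 34, 234, 434, 1234, 4234, 41234, 34234, 341234, 434234, 2341234, 4341234, 42341234,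
  342341234, 4342341234]

/-- Transversal words, level 3. -/
def ws3 : List ℕ := [
  0, 2, 12, 32, 312, 2312]

/-- Transversal words, level 4. -/
def ws4 : List ℕ := [
  0, 1, 3, 31]

theorem upper : Finite Theta' ∧ Nat.card Theta' ≤ 2 ^ 18 * 3 ^ 2 := by
  obtain ⟨n1, l1⟩ := relIndex_le gN_sq gN_rel T0 128 D0 [0,1,2,3,4,5] [0,1,2,3,4] I0
    (by norm_num) (by decide +kernel)
  obtain ⟨n2, l2⟩ := relIndex_le gN_sq gN_rel T1 16 D1 [0,1,2,3,4] [1,2,3,4] I1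
    (by norm_num) (by decide +kernel)
  obtain ⟨n3, l3⟩ := relIndex_le gN_sq gN_rel T2 24 D2 [1,2,3,4] [1,2,3] I2
    (by norm_num) (by decide +kernel)
  obtain ⟨n4, l4⟩ := relIndex_le gN_sq gN_rel T3 8 D3 [1,2,3] [1,2] I3
    (by norm_num) (by decide +kernel)
  obtain ⟨n5, l5⟩ := relIndex_le gN_sq gN_rel T4 3 D4 [1,2] [1] I4
    (by norm_num) (by decide +kernel)
  obtain ⟨n6, l6⟩ := relIndex_le gN_sq gN_rel T5 2 D5 [1] [] I5
    (by norm_num) (by decide +kernel)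
  have m1 : gen gN [0,1,2,3,4] ≤ gen gN [0,1,2,3,4,5] := gen_mono (by simp)
  have m2 : gen gN [1,2,3,4] ≤ gen gN [0,1,2,3,4] := gen_mono (by simp)
  have m3 : gen gN [1,2,3] ≤ gen gN [1,2,3,4] := gen_mono (by simp)
  have m4 : gen gN [1,2] ≤ gen gN [1,2,3] := gen_mono (by simp)
  have m5 : gen gN [1] ≤ gen gN [1,2] := gen_mono (by simp)
  have m6 : gen gN [] ≤ gen gN [1] := gen_mono (by simp)
  have e : Nat.card Theta' = (gen gN []).relIndex (gen gN [0,1,2,3,4,5]) := by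
    rw [gen_top, gen_nil, Subgroup.relIndex_top_right, Subgroup.index_bot]
  rw [← Subgroup.relIndex_mul_relIndex _ _ _ (m6.trans (m5.trans (m4.trans (m3.trans m2)))) m1,
    ← Subgroup.relIndex_mul_relIndex _ _ _ (m6.trans (m5.trans (m4.trans m3))) m2,
    ← Subgroup.relIndex_mul_relIndex _ _ _ (m6.trans (m5.trans m4)) m3,
    ← Subgroup.relIndex_mul_relIndex _ _ _ (m6.trans m5) m4,
    ← Subgroup.relIndex_mul_relIndex _ _ _ m6 m5] at e
  constructor
  · apply Nat.finite_of_card_ne_zero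
    rw [e]
    positivity
  · rw [e]
    calc _ ≤ 2 * 3 * 8 * 24 * 16 * 128 := by gcongr
      _ = _ := by norm_num

/-! ### The permutation representation and the lower bound -/

/-- The action of the generators on the 128 facets. -/
def pf (s : Fin 6) (i : Fin 128) : Fin 128 :=
  ⟨look T0 i s, Nat.mod_lt _ (by norm_num)⟩

theorem pf_inv : ∀ s : Fin 6, ∀ i : Fin 128, pf s (pf s i) = i := by decide +kernel

/-- The permutations of the 128 facets given by the generators. -/
def pp (s : Fin 6) : Equiv.Perm (Fin 128) := Function.Involutive.toPerm (pf s) (pf_inv s)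

theorem pp_rel (i j : Fin 6) : (pp i * pp j) ^ cox6 i j = 1 := by
  have h : ∀ i j : Fin 6, ∀ x : Fin 128, (fun y => pf i (pf j y))^[cox6 i j] x = x := by
    decide +kernel
  ext x
  rw [Equiv.Perm.coe_pow]
  exact congrArg Fin.val (h i j x)

theorem pp_big : (pp 0 * (pp 1 * pp 2 * pp 3 * pp 2 * pp 1) * (pp 4 * pp 3 * pp 2 * pp 3 * pp 4)
    * (pp 1 * pp 2 * pp 3 * pp 2 * pp 1)) ^ 2 = 1 := by
  have h : ∀ x : Fin 128, (fun y => pf 0 (pf 1 (pf 2 (pf 3 (pf 2 (pf 1 (pf 4 (pf 3 (pf 2 (pf 3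
      (pf 4 (pf 1 (pf 2 (pf 3 (pf 2 (pf 1 y))))))))))))))))^[2] x = x := by
    decide +kernel
  ext x
  rw [Equiv.Perm.coe_pow]
  exact congrArg Fin.val (h x)

/-- The permutation representation of `W`. -/
def phiW : W →* Equiv.Perm (Fin 128) :=
  PresentedGroup.toGroup (f := pp) (by
    rintro _ ⟨⟨i, j⟩, rfl⟩
    simpa using pp_rel i j)

theorem phiW_w (i : Fin 6) : phiW (w i) = pp i := PresentedGroup.toGroup.of _

/-- The permutation representation of `Theta'`. -/
def phi : Theta' →* Equiv.Perm (Fin 128) :=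
  QuotientGroup.lift _ phiW (by
    intro x hx
    have : Subgroup.normalClosure ({(w 0 * sg * tu * sg) ^ 2} : Set W) ≤ phiW.ker := by
      apply Subgroup.normalClosure_le_normal
      rintro _ rfl
      change phiW _ = 1
      simp only [sg, tu, map_pow, map_mul, phiW_w]
      exact pp_big
    exact this hx)

theorem phi_gN (n : ℕ) : phi (gN n) = pp (Fin.ofNat 6 n) := phiW_w _

/-- Decode a word written with the decimal digits 1, ..., 6; the last letter acts first. -/
def wordAct : ℕ → ℕ → ℕ → ℕ
  | 0, _, p => p
  | k + 1, c, p => bif c.beq 0 then p else wordAct k (c / 10) (look T0 p ((c - 1) % 10 % 6))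

/-- The group element given by a decimal code. -/
def wordEl : ℕ → ℕ → Theta'
  | 0, _ => 1
  | k + 1, c => bif c.beq 0 then 1 else wordEl k (c / 10) * gN ((c - 1) % 10 % 6)

theorem wordEl_act (k c : ℕ) (p : Fin 128) :
    ((phi (wordEl k c) p : Fin 128) : ℕ) = wordAct k c p := by
  induction k generalizing c p with
  | zero => simp [wordEl, wordAct]
  | succ k ih =>
    rw [wordEl, wordAct]
    cases c.beq 0 with
    | true => simp
    | false =>
      simp only [cond_false, map_mul, Equiv.Perm.mul_apply, ih, phi_gN]
      congr 1
      change look T0 p (Fin.ofNat 6 _ : Fin 6) = _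
      simp

/-- The pointwise stabilizer of a list of facets. -/
def stab : List (Fin 128) → Subgroup Theta'
  | [] => ⊤
  | b :: L => stab L ⊓ (MulAction.stabilizer (Equiv.Perm (Fin 128)) b).comap phi

theorem mem_stab (L : List (Fin 128)) (x : Theta') : x ∈ stab L ↔ ∀ b ∈ L, phi x b = b := by
  induction L with
  | nil => simp [stab]
  | cons b L ih =>
    rw [stab, Subgroup.mem_inf, ih, Subgroup.mem_comap, MulAction.mem_stabilizer_iff,
      List.forall_mem_cons, and_comm]
    rfl

/-- All words in `ws` fix the points of `L` and map `b` to different points. -/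
def chk (L : List ℕ) (b : ℕ) (ws : List ℕ) : Bool :=
  ws.all (fun c => L.all fun p => (wordAct 30 c p).beq p) &&
    decide ((ws.map fun c => wordAct 30 c b).Nodup)

theorem le_relIndex [Finite Theta'] (L : List (Fin 128)) (b : Fin 128) (ws : List ℕ)
    (h : chk (L.map Fin.val) b ws = true) :
    ws.length ≤ (stab (b :: L)).relIndex (stab L) := by
  simp only [chk, Bool.and_eq_true, List.all_eq_true, decide_eq_true_eq] at h
  obtain ⟨h1, h2⟩ := h
  have hmem : ∀ c ∈ ws, wordEl 30 c ∈ stab L := by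
    intro c hc
    rw [mem_stab]
    intro p hp
    apply Fin.ext
    rw [wordEl_act]
    exact Nat.eq_of_beq_eq_true (h1 c hc p (List.mem_map_of_mem hp))
  let _ : MulAction (stab L) (Fin 128) :=
    MulAction.compHom (Fin 128) (phi.comp (stab L).subtype)
  have hsm : ∀ (y : stab L) (p : Fin 128), y • p = phi y.1 p := fun _ _ => rfl
  have hstab : MulAction.stabilizer (stab L) b = (stab (b :: L)).subgroupOf (stab L) := by
    ext y
    rw [MulAction.mem_stabilizer_iff, Subgroup.mem_subgroupOf, hsm, stab, Subgroup.mem_inf]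
    simp [MulAction.mem_stabilizer_iff]
  rw [Subgroup.relIndex, ← hstab, MulAction.index_stabilizer]
  have h3 : (ws.map fun c => phi (wordEl 30 c) b).Nodup := by
    apply List.Nodup.of_map Fin.val
    rw [List.map_map]
    convert h2 using 2
    funext c
    exact wordEl_act 30 c b
  calc ws.length = (ws.map fun c => phi (wordEl 30 c) b).toFinset.card := by
        rw [List.toFinset_card_of_nodup h3, List.length_map]
    _ = ((ws.map fun c => phi (wordEl 30 c) b).toFinset : Set (Fin 128)).ncard := by
        rw [Set.ncard_coe_finset]
    _ ≤ _ := by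
        apply Set.ncard_le_ncard _ (Set.toFinite _)
        intro y hy
        simp only [List.coe_toFinset, List.mem_map, Set.mem_ofPred_eq] at hy
        obtain ⟨c, hc, rfl⟩ := hy
        exact ⟨⟨wordEl 30 c, hmem c hc⟩, rfl⟩

theorem stab_le (b : Fin 128) (L : List (Fin 128)) : stab (b :: L) ≤ stab L := inf_le_left

theorem lower [Finite Theta'] : 2 ^ 18 * 3 ^ 2 ≤ Nat.card Theta' := by
  have h0 := le_relIndex [] 0 ws0 (by decide +kernel)
  rw [show ws0.length = 128 by decide +kernel] at h0
  have h1 := le_relIndex [0] 1 ws1 (by decide +kernel)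
  rw [show ws1.length = 48 by decide +kernel] at h1
  have h2 := le_relIndex [1, 0] 2 ws2 (by decide +kernel)
  rw [show ws2.length = 16 by decide +kernel] at h2
  have h3 := le_relIndex [2, 1, 0] 6 ws3 (by decide +kernel)
  rw [show ws3.length = 6 by decide +kernel] at h3
  have h4 := le_relIndex [6, 2, 1, 0] 8 ws4 (by decide +kernel)
  rw [show ws4.length = 4 by decide +kernel] at h4
  have e : (stab [8, 6, 2, 1, 0]).relIndex (stab []) ≤ Nat.card Theta' := by
    rw [stab, Subgroup.relIndex_top_right]
    exact Nat.le_of_dvd Nat.card_pos (Subgroup.index_dvd_card _)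
  have s0 := stab_le 0 []
  have s1 := stab_le 1 [0]
  have s2 := stab_le 2 [1, 0]
  have s3 := stab_le 6 [2, 1, 0]
  have s4 := stab_le 8 [6, 2, 1, 0]
  rw [← Subgroup.relIndex_mul_relIndex _ _ _ (s4.trans (s3.trans (s2.trans s1))) s0,
    ← Subgroup.relIndex_mul_relIndex _ _ _ (s4.trans (s3.trans s2)) s1,
    ← Subgroup.relIndex_mul_relIndex _ _ _ (s4.trans s3) s2,
    ← Subgroup.relIndex_mul_relIndex _ _ _ s4 s3] at e
  refine le_trans ?_ e
  calc 2 ^ 18 * 3 ^ 2 = 4 * 6 * 16 * 48 * 128 := by norm_num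
    _ ≤ _ := by gcongr

end Theta9

/-- Theta' is finite of order 2^18 * 3^2 = 2359296. -/
theorem stmt_9 : Finite Theta' ∧ Nat.card Theta' = 2 ^ 18 * 3 ^ 2 := by
  obtain ⟨hf, hu⟩ := Theta9.upper
  exact ⟨hf, le_antisymm hu Theta9.lower⟩
end

section
/- In Theta', the subgroup generated by the images of b, c, d, e, f has index 32, and the subgroup generated by the images of a, b, c, d, e has index 128. (These are the numbers of vertices and facets of the universal polytope {{3,3,4,3}_{(2,0,0,0)}, {3,4,3,3}_{(2,2,0,0)}}.) -/
namespace CosetEnum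

/-- Entry `e = 6 * x + k` of the coset table packed into `N`: the coset `s k • x`. -/
def ent (N e : ℕ) : ℕ := (N >>> (7 * e)) &&& 127

/-- Defining relators of the group, as words in the generators `0, …, 5`. -/
def relators : List (List ℕ) :=
  [[0,1,0,1,0,1], [0,2,0,2], [0,3,0,3], [0,4,0,4], [0,5,0,5],
   [1,2,1,2,1,2], [1,3,1,3], [1,4,1,4], [1,5,1,5],
   [2,3,2,3,2,3,2,3], [2,4,2,4], [2,5,2,5],
   [3,4,3,4,3,4], [3,5,3,5], [4,5,4,5,4,5],
   [0,1,2,3,2,1,4,3,2,3,4,1,2,3,2,1,0,1,2,3,2,1,4,3,2,3,4,1,2,3,2,1]]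

/-- Trace a word (acting from the right end) through the known part `m` of the table. -/
def trav (N m : ℕ) : List ℕ → ℕ → Option ℕ
  | [], x => some x
  | k :: t, x =>
    match trav N m t x with
    | none => none
    | some y => if m.testBit (6 * y + k) && decide (k < 6) then some (ent N (6 * y + k)) else none

def mark (m e : ℕ) : ℕ := m ||| 2 ^ e

/-- One deduction from relator number `r` at the coset `x`, with the gap at position `p`. -/
def ded (N m : ℕ) (c : ℕ × ℕ × ℕ) : ℕ :=
  match relators.getD c.2.1 [] |>.drop c.2.2 with
  | [] => m
  | k :: t =>
    match trav N m t c.1, trav N m ((relators.getD c.2.1 []).take c.2.2).reverse c.1 with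
    | some y, some z =>
      if k < 6 ∧ ent N (6 * y + k) = z ∧ ent N (6 * z + k) = y then
        mark (mark m (6 * y + k)) (6 * z + k)
      else m
    | _, _ => m

/-- Enter a definition (an edge of the spanning tree) or a subgroup generator. -/
def ini (N : ℕ) (ws : List (List ℕ)) (gens : List ℕ) (m e : ℕ) : ℕ :=
  if e ∈ gens ∧ e < 6 ∧ ent N e = 0 ∧ ws.getD 0 [] = [] then mark m e
  else if ws.getD (ent N e) [] = (e % 6) :: ws.getD (e / 6) [] ∧
      ent N (6 * ent N e + e % 6) = e / 6 then
    mark (mark m e) (6 * ent N e + e % 6)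
  else m

section Sound

variable {G X : Type*} [Group G] [MulAction G X] (s : ℕ → G) (x0 : X)

/-- The point of `X` named by coset `i`. -/
def pt (ws : List (List ℕ)) (i : ℕ) : X := ((ws.getD i []).map s).prod • x0

/-- All marked entries of the table are correct. -/
def Good (N : ℕ) (v : ℕ → X) (m : ℕ) : Prop :=
  ∀ e, m.testBit e = true → s (e % 6) • v (e / 6) = v (ent N e)

variable {s}

theorem Good.mark {N : ℕ} {v : ℕ → X} {m e : ℕ} (h : Good s N v m)
    (he : s (e % 6) • v (e / 6) = v (ent N e)) : Good s N v (mark m e) := by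
  intro e2 hb
  simp only [CosetEnum.mark, Nat.testBit_or, Nat.testBit_two_pow, Bool.or_eq_true,
    decide_eq_true_eq] at hb
  rcases hb with hb | rfl
  · exact h e2 hb
  · exact he

theorem trav_sound {N : ℕ} {v : ℕ → X} {m : ℕ} (h : Good s N v m) (w : List ℕ) :
    ∀ x y, trav N m w x = some y → (w.map s).prod • v x = v y := by
  induction w with
  | nil => intro x y hxy; simp only [trav, Option.some.injEq] at hxy; simp [hxy]
  | cons k t ih =>
    intro x y hxy
    simp only [trav] at hxy
    split at hxy
    · exact absurd hxy (by simp)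
    · rename_i z hz
      split at hxy
      · rename_i hb
        simp only [Bool.and_eq_true, decide_eq_true_eq] at hb
        have h1 := h _ hb.1
        have e1 : (6 * z + k) % 6 = k := by omega
        have e2 : (6 * z + k) / 6 = z := by omega
        rw [e1, e2] at h1
        simp only [Option.some.injEq] at hxy
        rw [List.map_cons, List.prod_cons, mul_smul, ih x z hz, h1, hxy]
      · exact absurd hxy (by simp)

theorem prod_reverse (hs : ∀ k, s k * s k = 1) (u : List ℕ) :
    (u.reverse.map s).prod = ((u.map s).prod)⁻¹ := by
  induction u with
  | nil => simp
  | cons k t ih =>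
    have : (s k)⁻¹ = s k := inv_eq_of_mul_eq_one_left (hs k)
    rw [List.reverse_cons, List.map_append, List.prod_append, ih]
    simp [this]

theorem ded_sound (hs : ∀ k, s k * s k = 1)
    (hr : ∀ w ∈ relators, (w.map s).prod = 1) {N : ℕ} {v : ℕ → X} {m : ℕ}
    (h : Good s N v m) (c : ℕ × ℕ × ℕ) : Good s N v (ded N m c) := by
  obtain ⟨x, r, p⟩ := c
  have hw : ((relators.getD r []).map s).prod = 1 := by
    rw [List.getD_eq_getElem?_getD]
    rcases hq : relators[r]? with _ | w
    · simp
    · exact hr w (List.mem_of_getElem? hq)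
  unfold ded
  dsimp only
  split
  · exact h
  rename_i k t hkt
  split
  · rename_i y z hy hz
    split
    · rename_i hc
      obtain ⟨hk, h1, h2⟩ := hc
      have a1 := trav_sound h _ _ _ hy
      have a2 := trav_sound h _ _ _ hz
      rw [prod_reverse hs] at a2
      rw [← List.take_append_drop p (relators.getD r []), hkt] at hw
      simp only [List.map_append, List.map_cons, List.prod_append, List.prod_cons] at hw
      have key : s k • v y = v z := by
        rw [← a1, ← a2, smul_smul]
        congr 1
        exact eq_inv_of_mul_eq_one_right hw
      have key2 : s k • v z = v y := by
        rw [← key, smul_smul, hs, one_smul]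
      refine (h.mark ?_).mark ?_
      · rw [show (6 * y + k) % 6 = k by omega, show (6 * y + k) / 6 = y by omega, h1, key]
      · rw [show (6 * z + k) % 6 = k by omega, show (6 * z + k) / 6 = z by omega, h2, key2]
    · exact h
  · exact h

theorem ini_sound (hs : ∀ k, s k * s k = 1) {x0 : X} {gens : List ℕ}
    (hg : ∀ k ∈ gens, s k • x0 = x0) {N : ℕ} {ws : List (List ℕ)} {m : ℕ}
    (h : Good s N (pt s x0 ws) m) (e : ℕ) :
    Good s N (pt s x0 ws) (ini N ws gens m e) := by
  unfold ini
  split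
  · rename_i hc
    obtain ⟨h1, h2, h3, h4⟩ := hc
    refine h.mark ?_
    rw [show e % 6 = e by omega, show e / 6 = 0 by omega, h3]
    simp only [pt, h4, List.map_nil, List.prod_nil, one_smul]
    exact hg e h1
  · split
    · rename_i hc
      obtain ⟨h1, h2⟩ := hc
      have key : s (e % 6) • pt s x0 ws (e / 6) = pt s x0 ws (ent N e) := by
        simp only [pt, h1, List.map_cons, List.prod_cons, mul_smul]
      refine (h.mark key).mark ?_
      rw [show (6 * ent N e + e % 6) % 6 = e % 6 by omega,
        show (6 * ent N e + e % 6) / 6 = ent N e by omega, h2, ← key, smul_smul, hs, one_smul]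
    · exact h

/-- The mask of table entries that the certificate establishes. -/
def run (N : ℕ) (ws : List (List ℕ)) (gens init : List ℕ) (ds : List (ℕ × ℕ × ℕ)) : ℕ :=
  ds.foldl (ded N) (init.foldl (ini N ws gens) 0)

theorem run_sound (hs : ∀ k, s k * s k = 1)
    (hr : ∀ w ∈ relators, (w.map s).prod = 1) {x0 : X} {gens : List ℕ}
    (hg : ∀ k ∈ gens, s k • x0 = x0) (N : ℕ) (ws : List (List ℕ)) (init : List ℕ)
    (ds : List (ℕ × ℕ × ℕ)) :
    Good s N (pt s x0 ws) (run N ws gens init ds) := by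
  have h0 : Good s N (pt s x0 ws) 0 := by
    intro e he; simp at he
  have h1 : ∀ (l : List ℕ) (m : ℕ), Good s N (pt s x0 ws) m →
      Good s N (pt s x0 ws) (l.foldl (ini N ws gens) m) := by
    intro l
    induction l with
    | nil => intro m hm; exact hm
    | cons e l ih => intro m hm; exact ih _ (ini_sound hs hg hm e)
  have h2 : ∀ (l : List (ℕ × ℕ × ℕ)) (m : ℕ), Good s N (pt s x0 ws) m →
      Good s N (pt s x0 ws) (l.foldl (ded N) m) := by
    intro l
    induction l with
    | nil => intro m hm; exact hm
    | cons e l ih => intro m hm; exact ih _ (ded_sound hs hr hm e)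
  exact h2 _ _ (h1 _ _ h0)

/-- Upper bound: a complete certificate shows that the `n` named points are closed under `G`. -/
theorem surj_of_run (hs : ∀ k, s k * s k = 1)
    (hr : ∀ w ∈ relators, (w.map s).prod = 1)
    (hgen : Subgroup.closure (s '' {k | k < 6}) = ⊤)
    {x0 : X} (htrans : ∀ x : X, ∃ g : G, g • x0 = x) {gens : List ℕ}
    (hg : ∀ k ∈ gens, s k • x0 = x0) (n N : ℕ) (ws : List (List ℕ)) (init : List ℕ)
    (ds : List (ℕ × ℕ × ℕ)) (hn : 0 < n) (h0 : ws.getD 0 [] = [])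
    (hrun : run N ws gens init ds = 2 ^ (6 * n) - 1)
    (hlt : ∀ e < 6 * n, ent N e < n) :
    Function.Surjective (fun i : Fin n => pt s x0 ws i) := by
  have hgood := run_sound hs hr hg N ws init ds
  rw [hrun] at hgood
  have step : ∀ k < 6, ∀ i : Fin n, ∃ j : Fin n, s k • pt s x0 ws i = pt s x0 ws j := by
    intro k hk i
    have hi := i.2
    have hb : 6 * i.1 + k < 6 * n := by omega
    have := hgood (6 * i.1 + k) (by rw [Nat.testBit_two_pow_sub_one]; simpa using hb)
    rw [show (6 * i.1 + k) % 6 = k by omega, show (6 * i.1 + k) / 6 = i.1 by omega] at this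
    exact ⟨⟨_, hlt _ hb⟩, this⟩
  have all : ∀ g : G, ∀ i : Fin n, ∃ j : Fin n, g • pt s x0 ws i = pt s x0 ws j := by
    intro g
    have hgm : g ∈ Subgroup.closure (s '' {k | k < 6}) := by rw [hgen]; trivial
    induction hgm using Subgroup.closure_induction'' with
    | mem g hg' => obtain ⟨k, hk, rfl⟩ := hg'; exact step k hk
    | inv_mem g hg' =>
      obtain ⟨k, hk, rfl⟩ := hg'
      rw [inv_eq_of_mul_eq_one_left (hs k)]; exact step k hk
    | one => intro i; exact ⟨i, one_smul _ _⟩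
    | mul a b _ _ ha hb =>
      intro i
      obtain ⟨j, hj⟩ := hb i
      obtain ⟨l, hl⟩ := ha j
      exact ⟨l, by rw [mul_smul, hj, hl]⟩
  intro x
  obtain ⟨g, rfl⟩ := htrans x
  obtain ⟨j, hj⟩ := all g ⟨0, hn⟩
  refine ⟨j, ?_⟩
  dsimp only at hj ⊢
  rw [← hj]
  simp [pt, -List.getD_eq_getElem?_getD, h0]

end Sound

/-- The generator `k` acting on `Fin n` via the table. -/
def tabFun (n N : ℕ) (hlt : ∀ e < 6 * n, ent N e < n) (k : Fin 6) (x : Fin n) : Fin n :=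
  ⟨ent N (6 * x.1 + k.1), hlt _ (by omega)⟩

/-- Trace a word through the full table. -/
def full (N : ℕ) : List ℕ → ℕ → ℕ
  | [], x => x
  | k :: t, x => ent N (6 * full N t x + k)

def tabPerm (n N : ℕ) (hlt : ∀ e < 6 * n, ent N e < n)
    (hinv : ∀ k < 6, ∀ x < n, full N [k, k] x = x) (k : Fin 6) : Equiv.Perm (Fin n) where
  toFun := tabFun n N hlt k
  invFun := tabFun n N hlt k
  left_inv x := Fin.ext (hinv k.1 k.2 x.1 x.2)
  right_inv x := Fin.ext (hinv k.1 k.2 x.1 x.2)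

theorem full_eq {n N : ℕ} (hlt : ∀ e < 6 * n, ent N e < n)
    (hinv : ∀ k < 6, ∀ x < n, full N [k, k] x = x) (w : List (Fin 6)) (x : Fin n) :
    ((w.map (tabPerm n N hlt hinv)).prod x).1 = full N (w.map Fin.val) x.1 := by
  induction w with
  | nil => rfl
  | cons k t ih =>
    simp only [List.map_cons, List.prod_cons, Equiv.Perm.mul_apply, full]
    rw [← ih]; rfl

theorem pow_eq {M : Type*} [Monoid M] {ι : Type*} (p : ι → M) (i j : ι) (m : ℕ) :
    (p i * p j) ^ m = (((List.replicate m [i, j]).flatten).map p).prod := by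
  induction m with
  | zero => simp
  | succ m ih => rw [pow_succ', ih, List.replicate_succ]; simp [mul_assoc]

def longWord : List (Fin 6) := [0,1,2,3,2,1,4,3,2,3,4,1,2,3,2,1]

/-- All table checks which show that `Theta'` acts on `Fin n`. -/
def TabOk (n N : ℕ) : Prop :=
  (∀ e < 6 * n, ent N e < n) ∧ (∀ k < 6, ∀ x < n, full N [k, k] x = x) ∧
  (∀ i j : Fin 6, ∀ x < n,
    full N (((List.replicate (cox6 i j) [i, j]).flatten).map Fin.val) x = x) ∧
  (∀ x < n, full N ((longWord ++ longWord).map Fin.val) x = x)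

instance (n N : ℕ) : Decidable (TabOk n N) := by unfold TabOk; infer_instance

noncomputable def homW (n N : ℕ) (h : TabOk n N) : W →* Equiv.Perm (Fin n) :=
  PresentedGroup.toGroup (f := tabPerm n N h.1 h.2.1) (by
    rintro _ ⟨⟨i, j⟩, rfl⟩
    simp only [map_pow, map_mul, FreeGroup.lift_apply_of]
    rw [pow_eq]
    ext x
    rw [full_eq]
    exact h.2.2.1 i j x.1 x.2)

theorem homW_w (n N : ℕ) (h : TabOk n N) (i : Fin 6) :
    homW n N h (w i) = tabPerm n N h.1 h.2.1 i := PresentedGroup.toGroup.of _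

theorem long_eq {M : Type*} [Monoid M] (p : Fin 6 → M) :
    (p 0 * (p 1 * p 2 * p 3 * p 2 * p 1) * (p 4 * p 3 * p 2 * p 3 * p 4) *
      (p 1 * p 2 * p 3 * p 2 * p 1)) ^ 2 = ((longWord ++ longWord).map p).prod := by
  simp [longWord, pow_two, mul_assoc]

noncomputable def homT (n N : ℕ) (h : TabOk n N) : Theta' →* Equiv.Perm (Fin n) :=
  QuotientGroup.lift _ (homW n N h) (by
    intro g hg
    have : Subgroup.normalClosure ({(w 0 * sg * tu * sg) ^ 2} : Set W) ≤ (homW n N h).ker := by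
      apply Subgroup.normalClosure_le_normal
      rintro _ rfl
      change homW n N h _ = 1
      simp only [sg, tu, map_pow, map_mul, homW_w]
      rw [long_eq]
      ext x
      rw [full_eq]
      exact h.2.2.2 x.1 x.2
    exact this hg)

theorem homT_th (n N : ℕ) (h : TabOk n N) (i : Fin 6) :
    homT n N h (th' i) = tabPerm n N h.1 h.2.1 i := homW_w n N h i

/-- The generators of `Theta'`, indexed by natural numbers. -/
def gn (k : ℕ) : Theta' := th' (Fin.ofNat 6 k)

theorem th_rel (i j : Fin 6) : (th' i * th' j) ^ cox6 i j = 1 := by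
  have h : (w i * w j) ^ cox6 i j = 1 := by
    have := PresentedGroup.one_of_mem (rels := rels6)
      (x := (FreeGroup.of i * FreeGroup.of j) ^ cox6 i j) ⟨(i, j), rfl⟩
    exact this
  have := congrArg (QuotientGroup.mk' (Subgroup.normalClosure
    ({(w 0 * sg * tu * sg) ^ 2} : Set W))) h
  exact this

theorem th_long : ((longWord ++ longWord).map th').prod = 1 := by
  rw [← long_eq]
  have : (w 0 * sg * tu * sg) ^ 2 ∈ Subgroup.normalClosure ({(w 0 * sg * tu * sg) ^ 2} : Set W) :=
    Subgroup.subset_normalClosure rfl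
  exact (QuotientGroup.eq_one_iff _).2 this

theorem gn_sq (k : ℕ) : gn k * gn k = 1 := by
  have h := th_rel (Fin.ofNat 6 k) (Fin.ofNat 6 k)
  rw [show cox6 (Fin.ofNat 6 k) (Fin.ofNat 6 k) = 1 by simp [cox6], pow_one] at h
  exact h

theorem gn_rel : ∀ w ∈ relators, (w.map gn).prod = 1 := by
  have hp : ∀ i j : Fin 6, (((List.replicate (cox6 i j) [i.1, j.1]).flatten).map gn).prod = 1 := by
    intro i j
    rw [← pow_eq]
    simpa [gn] using th_rel i j
  simp only [relators, List.forall_mem_cons]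
  refine ⟨hp 0 1, hp 0 2, hp 0 3, hp 0 4, hp 0 5, hp 1 2, hp 1 3, hp 1 4, hp 1 5, hp 2 3, hp 2 4,
    hp 2 5, hp 3 4, hp 3 5, hp 4 5, th_long, by simp⟩

theorem gn_closure : Subgroup.closure (gn '' {k | k < 6}) = ⊤ := by
  have h1 : Subgroup.closure (Set.range w) = ⊤ := PresentedGroup.closure_range_of rels6
  let q := QuotientGroup.mk' (Subgroup.normalClosure ({(w 0 * sg * tu * sg) ^ 2} : Set W))
  have h2 : (Subgroup.closure (Set.range w)).map q = ⊤ := by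
    rw [h1]; exact Subgroup.map_top_of_surjective q (QuotientGroup.mk'_surjective _)
  rw [MonoidHom.map_closure] at h2
  rw [eq_top_iff, ← h2]
  apply Subgroup.closure_mono
  rintro _ ⟨_, ⟨i, rfl⟩, rfl⟩
  refine ⟨i.1, i.2, ?_⟩
  simp only [gn, Fin.ofNat_val_eq_self]
  rfl

/-- The index of a subgroup for which both the table and the certificate check. -/
theorem index_eq (H : Subgroup Theta') (gens : List ℕ) (S : Set Theta')
    (hH : H = Subgroup.closure S) (hS : ∀ g ∈ S, ∃ k ∈ gens, gn k = g)
    (hS' : ∀ k ∈ gens, gn k ∈ S)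
    (n N : ℕ) (ws : List (List ℕ)) (init : List ℕ) (ds : List (ℕ × ℕ × ℕ))
    (hn : 0 < n) (h0 : ws.getD 0 [] = [])
    (hrun : run N ws gens init ds = 2 ^ (6 * n) - 1)
    (htab : TabOk n N)
    (hfix : ∀ k ∈ gens, k < 6 ∧ ent N k = 0)
    (hws : ∀ i < n, (∀ k ∈ ws.getD i [], k < 6) ∧ full N (ws.getD i []) 0 = i) :
    H.index = n := by
  have hmem : ∀ k ∈ gens, gn k ∈ H := fun k hk => hH ▸ Subgroup.subset_closure (hS' k hk)
  have hsurj := surj_of_run (X := Theta' ⧸ H) gn_sq gn_rel gn_closure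
    (x0 := ((1 : Theta') : Theta' ⧸ H))
    (by
      intro x
      induction x using QuotientGroup.induction_on with
      | H g => exact ⟨g, by rw [MulAction.Quotient.smul_coe]; simp⟩)
    (gens := gens)
    (by
      intro k hk
      rw [MulAction.Quotient.smul_coe, QuotientGroup.eq]
      simpa using hmem k hk)
    n N ws init ds hn h0 hrun htab.1
  let o : Fin n := ⟨0, hn⟩
  have hstab : ∀ g ∈ H, homT n N htab g o = o := by
    have : H ≤ (MulAction.stabilizer (Equiv.Perm (Fin n)) o).comap (homT n N htab) := by
      rw [hH, Subgroup.closure_le]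
      intro g hg
      obtain ⟨k, hk, rfl⟩ := hS g hg
      obtain ⟨hk6, hk0⟩ := hfix k hk
      change homT n N htab (gn k) o = o
      rw [gn, homT_th]
      apply Fin.ext
      change ent N (6 * 0 + k % 6) = 0
      rw [Nat.mod_eq_of_lt hk6]
      simpa using hk0
    exact fun g hg => this hg
  have hfull : ∀ l : List ℕ, (∀ k ∈ l, k < 6) →
      (homT n N htab (l.map gn).prod o).1 = full N l 0 := by
    intro l
    induction l with
    | nil => intro _; simp [full, o]
    | cons k t ih =>
      intro hl
      have hk : k < 6 := hl k (by simp)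
      rw [List.map_cons, List.prod_cons, map_mul, Equiv.Perm.mul_apply, gn, homT_th]
      change ent N (6 * (homT n N htab (t.map gn).prod o).1 + k % 6) = _
      rw [ih (fun k hk => hl k (by simp [hk])), Nat.mod_eq_of_lt hk]
      rfl
  have hinj : Function.Injective
      (fun i : Fin n => pt gn ((1 : Theta') : Theta' ⧸ H) ws i) := by
    intro i j hij
    simp only [pt, MulAction.Quotient.smul_coe, smul_eq_mul, mul_one] at hij
    rw [QuotientGroup.eq] at hij
    have h1 := hstab _ hij
    rw [map_mul, map_inv, Equiv.Perm.mul_apply, Equiv.Perm.inv_eq_iff_eq] at h1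
    have h2 := congrArg Fin.val h1
    rw [hfull _ (hws i i.2).1, hfull _ (hws j j.2).1, (hws i i.2).2, (hws j j.2).2] at h2
    exact Fin.ext h2.symm
  have := Nat.card_congr (Equiv.ofBijective _ ⟨hinj, hsurj⟩)
  rw [Subgroup.index, ← this, Nat.card_fin]

def vTab : ℕ := 93728603267256679810135723789711293196430223897349035915143739404406243937696050452582883737237869287565971903253187449272849748556375603564938695722434836085431472444903086862135794946958921916071777527089430456640667757627252202555205269733885937023694415044263310204716386292444070214259506643136896060497235483026885275525014872440342211254889874321555030467799904796574138813964737065825424317087745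

def vWords : List (List ℕ) :=
  [[], [0], [1,0], [2,1,0], [3,2,1,0], [2,3,2,1,0], [4,3,2,1,0], [1,2,3,2,1,0], [4,2,3,2,1,0],
  [5,4,3,2,1,0], [0,1,2,3,2,1,0], [4,1,2,3,2,1,0], [3,4,2,3,2,1,0], [5,4,2,3,2,1,0],
  [4,0,1,2,3,2,1,0], [3,4,1,2,3,2,1,0], [5,4,1,2,3,2,1,0], [2,3,4,2,3,2,1,0], [5,3,4,2,3,2,1,0],
  [3,4,0,1,2,3,2,1,0], [5,4,0,1,2,3,2,1,0], [5,3,4,1,2,3,2,1,0], [5,2,3,4,2,3,2,1,0],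
  [4,5,3,4,2,3,2,1,0], [5,3,4,0,1,2,3,2,1,0], [4,5,3,4,1,2,3,2,1,0], [4,5,2,3,4,2,3,2,1,0],
  [4,5,3,4,0,1,2,3,2,1,0], [3,4,5,2,3,4,2,3,2,1,0], [2,3,4,5,2,3,4,2,3,2,1,0],
  [1,2,3,4,5,2,3,4,2,3,2,1,0], [0,1,2,3,4,5,2,3,4,2,3,2,1,0]]

def vInit : List ℕ :=
  [1, 2, 3, 4, 5, 0, 7, 14, 21, 26, 28, 31, 34, 41, 42, 46, 51, 53, 64, 69, 71, 74, 77, 87, 89,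
  95, 107, 112, 119, 130, 136, 148, 159, 170, 175, 180]

def vDed : List (ℕ × ℕ × ℕ) :=
  [(0,0,2), (0,1,1), (0,2,1), (0,3,1), (0,4,1), (0,15,8), (1,5,2), (1,6,1), (1,7,1), (1,8,1),
  (2,1,2), (2,9,3), (2,10,1), (2,11,1), (3,2,2), (3,6,2), (3,12,2), (3,13,1), (4,1,2), (4,3,2),
  (4,5,3), (4,7,2), (4,10,2), (4,11,1), (4,14,2), (5,0,3), (5,3,2), (5,6,1), (5,7,2), (5,8,1),
  (5,12,3), (5,14,2), (6,4,2), (6,5,3), (6,8,2), (6,9,3), (6,11,2), (6,13,2), (7,1,1), (7,2,1),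
  (7,3,2), (7,4,1), (7,12,3), (7,14,2), (7,15,8), (8,0,3), (8,2,2), (8,4,2), (8,6,2), (8,8,2),
  (8,13,2), (9,5,3), (10,10,2), (10,12,3), (10,14,2), (11,2,2), (11,4,2), (11,13,2), (12,0,3),
  (12,1,2), (12,4,2), (12,5,4), (12,8,2), (12,10,1), (12,11,2), (12,14,3), (13,0,3), (13,9,5),
  (13,12,2), (14,11,2), (14,13,2), (15,4,2), (15,11,2), (15,14,3), (16,12,2), (17,4,2), (17,8,2),
  (17,14,3), (18,0,3), (18,3,2), (18,7,2), (18,10,2), (19,11,2), (19,14,3), (20,12,2), (20,15,24),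
  (21,3,2), (21,10,2), (22,3,2), (22,7,2), (22,12,3), (23,0,3), (23,9,3), (26,2,2), (26,6,2),
  (26,13,1), (28,1,2), (28,5,3), (28,10,1), (28,11,1), (29,0,3), (29,6,1), (29,7,1), (29,8,1),
  (30,1,1), (30,2,1), (30,3,1), (30,4,1)]

def fTab : ℕ := 2157001468986570453224426432158286182867945961160312359682441484004360226792187353183476503361332538147311051820802361956796897870354849128830930913503826618341758446767500247310077950995393825802866178306484148711942107465955377316021290771386601992116382691410012440064578770958533420582630599621676176530145674132364987509511028126037983998567811305906386041723073217897619818869333416560093636620112013071040414885139915516486107512731097226498602862157529015042609102769095610558067606811711757414447798721810661228251721941077441034319757653942539513937446063715777557274167255826190768316373157524954917419693069249429446720894328029050024121111817886516107716671008584919152586056310362636103680948666640242741316573162418813948835535121292531922541461378791955682226908551060112376717040729299500000589224062414348332022609218524522484365079810884681168477580838700712780240578266568246594286819754792270736834928464024202058415182912195199340405889315008024083290894690856792706299832213368221790449590250951722090997514128146271960359473099847349262476996966639738037066201050096219519969411564304728459783175480031820329301538696084658975893666157862095445087184138620308128075087676133736784459436372340393043884521642558893338972611221312525682741016574053110689569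9605818397035532729471499145499552202462978853966550489621799580822919450104478493422623088701011963119815237352930222575257451948428500041369801521798089511115523470692275829686862494889301041355755309779515199846181503600810556777328668935464490821925997235292606133495125836196351469726828581700674089529527292675091946337207388959932416

def fWords : List (List ℕ) :=
  [[], [5], [4,5], [3,4,5], [2,3,4,5], [1,2,3,4,5], [3,2,3,4,5], [0,1,2,3,4,5], [3,1,2,3,4,5],
  [4,3,2,3,4,5], [3,0,1,2,3,4,5], [2,3,1,2,3,4,5], [4,3,1,2,3,4,5], [5,4,3,2,3,4,5],
  [2,3,0,1,2,3,4,5], [4,3,0,1,2,3,4,5], [3,2,3,1,2,3,4,5], [4,2,3,1,2,3,4,5], [5,4,3,1,2,3,4,5],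
  [1,2,3,0,1,2,3,4,5], [3,2,3,0,1,2,3,4,5], [4,2,3,0,1,2,3,4,5], [5,4,3,0,1,2,3,4,5],
  [4,3,2,3,1,2,3,4,5], [3,4,2,3,1,2,3,4,5], [5,4,2,3,1,2,3,4,5], [3,1,2,3,0,1,2,3,4,5],
  [4,1,2,3,0,1,2,3,4,5], [4,3,2,3,0,1,2,3,4,5], [3,4,2,3,0,1,2,3,4,5], [5,4,2,3,0,1,2,3,4,5],
  [3,4,3,2,3,1,2,3,4,5], [5,4,3,2,3,1,2,3,4,5], [2,3,4,2,3,1,2,3,4,5], [5,3,4,2,3,1,2,3,4,5],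
  [2,3,1,2,3,0,1,2,3,4,5], [4,3,1,2,3,0,1,2,3,4,5], [3,4,1,2,3,0,1,2,3,4,5],
  [5,4,1,2,3,0,1,2,3,4,5], [3,4,3,2,3,0,1,2,3,4,5], [5,4,3,2,3,0,1,2,3,4,5],
  [2,3,4,2,3,0,1,2,3,4,5], [5,3,4,2,3,0,1,2,3,4,5], [2,3,4,3,2,3,1,2,3,4,5],
  [5,3,4,3,2,3,1,2,3,4,5], [1,2,3,4,2,3,1,2,3,4,5], [5,2,3,4,2,3,1,2,3,4,5],
  [4,5,3,4,2,3,1,2,3,4,5], [3,2,3,1,2,3,0,1,2,3,4,5], [4,2,3,1,2,3,0,1,2,3,4,5],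
  [3,4,3,1,2,3,0,1,2,3,4,5], [5,4,3,1,2,3,0,1,2,3,4,5], [5,3,4,1,2,3,0,1,2,3,4,5],
  [2,3,4,3,2,3,0,1,2,3,4,5], [5,3,4,3,2,3,0,1,2,3,4,5], [5,2,3,4,2,3,0,1,2,3,4,5],
  [4,5,3,4,2,3,0,1,2,3,4,5], [1,2,3,4,3,2,3,1,2,3,4,5], [3,2,3,4,3,2,3,1,2,3,4,5],
  [5,2,3,4,3,2,3,1,2,3,4,5], [4,5,3,4,3,2,3,1,2,3,4,5], [5,1,2,3,4,2,3,1,2,3,4,5],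
  [4,5,2,3,4,2,3,1,2,3,4,5], [4,3,2,3,1,2,3,0,1,2,3,4,5], [3,4,2,3,1,2,3,0,1,2,3,4,5],
  [5,4,2,3,1,2,3,0,1,2,3,4,5], [5,3,4,3,1,2,3,0,1,2,3,4,5], [4,5,3,4,1,2,3,0,1,2,3,4,5],
  [3,2,3,4,3,2,3,0,1,2,3,4,5], [5,2,3,4,3,2,3,0,1,2,3,4,5], [4,5,3,4,3,2,3,0,1,2,3,4,5],
  [4,5,2,3,4,2,3,0,1,2,3,4,5], [3,1,2,3,4,3,2,3,1,2,3,4,5], [5,1,2,3,4,3,2,3,1,2,3,4,5],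
  [5,3,2,3,4,3,2,3,1,2,3,4,5], [4,5,2,3,4,3,2,3,1,2,3,4,5], [4,5,1,2,3,4,2,3,1,2,3,4,5],
  [3,4,5,2,3,4,2,3,1,2,3,4,5], [3,4,3,2,3,1,2,3,0,1,2,3,4,5], [5,4,3,2,3,1,2,3,0,1,2,3,4,5],
  [5,3,4,2,3,1,2,3,0,1,2,3,4,5], [4,5,3,4,3,1,2,3,0,1,2,3,4,5], [5,3,2,3,4,3,2,3,0,1,2,3,4,5],
  [4,5,2,3,4,3,2,3,0,1,2,3,4,5], [3,4,5,2,3,4,2,3,0,1,2,3,4,5], [2,3,1,2,3,4,3,2,3,1,2,3,4,5],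
  [5,3,1,2,3,4,3,2,3,1,2,3,4,5], [4,5,1,2,3,4,3,2,3,1,2,3,4,5], [4,5,3,2,3,4,3,2,3,1,2,3,4,5],
  [3,4,5,2,3,4,3,2,3,1,2,3,4,5], [3,4,5,1,2,3,4,2,3,1,2,3,4,5], [2,3,4,5,2,3,4,2,3,1,2,3,4,5],
  [5,3,4,3,2,3,1,2,3,0,1,2,3,4,5], [4,5,3,4,2,3,1,2,3,0,1,2,3,4,5],
  [4,5,3,2,3,4,3,2,3,0,1,2,3,4,5], [3,4,5,2,3,4,3,2,3,0,1,2,3,4,5],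
  [2,3,4,5,2,3,4,2,3,0,1,2,3,4,5], [3,2,3,1,2,3,4,3,2,3,1,2,3,4,5],
  [5,2,3,1,2,3,4,3,2,3,1,2,3,4,5], [4,5,3,1,2,3,4,3,2,3,1,2,3,4,5],
  [3,4,5,1,2,3,4,3,2,3,1,2,3,4,5], [3,4,5,3,2,3,4,3,2,3,1,2,3,4,5],
  [2,3,4,5,2,3,4,3,2,3,1,2,3,4,5], [4,5,3,4,3,2,3,1,2,3,0,1,2,3,4,5],
  [3,4,5,3,2,3,4,3,2,3,0,1,2,3,4,5], [2,3,4,5,2,3,4,3,2,3,0,1,2,3,4,5],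
  [1,2,3,4,5,2,3,4,2,3,0,1,2,3,4,5], [4,3,2,3,1,2,3,4,3,2,3,1,2,3,4,5],
  [5,3,2,3,1,2,3,4,3,2,3,1,2,3,4,5], [4,5,2,3,1,2,3,4,3,2,3,1,2,3,4,5],
  [3,4,5,3,1,2,3,4,3,2,3,1,2,3,4,5], [2,3,4,5,3,2,3,4,3,2,3,1,2,3,4,5],
  [2,3,4,5,3,2,3,4,3,2,3,0,1,2,3,4,5], [1,2,3,4,5,2,3,4,3,2,3,0,1,2,3,4,5],
  [5,4,3,2,3,1,2,3,4,3,2,3,1,2,3,4,5], [4,5,3,2,3,1,2,3,4,3,2,3,1,2,3,4,5],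
  [3,4,5,2,3,1,2,3,4,3,2,3,1,2,3,4,5], [3,2,3,4,5,3,2,3,4,3,2,3,1,2,3,4,5],
  [1,2,3,4,5,3,2,3,4,3,2,3,0,1,2,3,4,5], [3,2,3,4,5,3,2,3,4,3,2,3,0,1,2,3,4,5],
  [4,5,4,3,2,3,1,2,3,4,3,2,3,1,2,3,4,5], [3,4,5,3,2,3,1,2,3,4,3,2,3,1,2,3,4,5],
  [3,1,2,3,4,5,3,2,3,4,3,2,3,0,1,2,3,4,5], [3,4,5,4,3,2,3,1,2,3,4,3,2,3,1,2,3,4,5],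
  [2,3,1,2,3,4,5,3,2,3,4,3,2,3,0,1,2,3,4,5], [3,2,3,1,2,3,4,5,3,2,3,4,3,2,3,0,1,2,3,4,5],
  [4,3,2,3,1,2,3,4,5,3,2,3,4,3,2,3,0,1,2,3,4,5], [5,4,3,2,3,1,2,3,4,5,3,2,3,4,3,2,3,0,1,2,3,4,5]]

def fInit : List ℕ :=
  [0, 1, 2, 3, 4, 5, 10, 15, 20, 25, 27, 30, 33, 40, 45, 50, 52, 59, 62, 64, 69, 70, 77, 85, 87,
  88, 95, 100, 105, 107, 117, 118, 124, 129, 131, 141, 143, 146, 149, 158, 160, 165, 167, 171,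
  173, 176, 179, 188, 191, 199, 203, 208, 213, 214, 219, 221, 227, 236, 239, 251, 256, 259, 261,
  263, 268, 275, 280, 292, 297, 299, 305, 316, 321, 323, 328, 334, 345, 347, 353, 358, 370, 375,
  381, 383, 389, 400, 413, 418, 429, 434, 437, 442, 448, 453, 459, 464, 473, 484, 496, 501, 506,
  513, 515, 520, 525, 531, 536, 556, 567, 572, 577, 586, 587, 592, 597, 608, 626, 631, 647, 652,
  657, 669, 673, 675, 688, 693, 711, 723, 734, 747, 754, 761]

def fDed : List (ℕ × ℕ × ℕ) :=
  [(0,4,2), (0,8,2), (0,11,2), (0,13,2), (0,14,3), (1,3,2), (1,7,2), (1,10,2), (1,12,3), (2,2,2),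
  (2,6,2), (2,9,4), (2,13,1), (3,1,2), (3,5,3), (3,10,1), (3,11,1), (4,0,3), (4,2,2), (4,6,2),
  (4,7,1), (4,8,1), (4,12,2), (4,13,1), (5,1,1), (5,2,2), (5,3,1), (5,4,1), (5,9,4), (5,12,2),
  (5,13,1), (5,15,8), (6,0,3), (6,3,2), (6,5,2), (6,7,2), (6,10,2), (6,14,2), (7,9,4), (7,12,2),
  (7,13,1), (8,1,2), (8,3,2), (8,10,2), (8,11,1), (8,14,2), (9,0,3), (9,4,2), (9,5,2), (9,8,2),
  (9,11,2), (9,13,2), (10,5,3), (10,10,2), (10,11,1), (10,14,2), (11,0,2), (11,2,2), (11,3,2),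
  (11,6,2), (11,12,3), (11,13,1), (11,14,2), (12,4,2), (12,9,3), (12,11,2), (12,13,2), (13,0,3),
  (13,5,2), (14,6,2), (14,7,2), (14,8,1), (14,12,3), (14,13,1), (14,14,2), (15,5,3), (15,9,3),
  (15,11,2), (15,13,2), (16,0,2), (16,3,2), (16,7,2), (16,10,2), (16,14,2), (17,0,2), (17,2,2),
  (17,4,2), (17,6,2), (17,13,2), (19,9,4), (19,12,3), (19,13,1), (19,14,2), (20,5,2), (20,7,2),
  (20,10,2), (20,14,2), (21,6,2), (21,8,2), (21,13,2), (22,5,3), (23,0,2), (23,2,2), (23,4,2),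
  (23,6,2), (23,8,2), (23,9,4), (23,11,2), (23,13,2), (24,0,2), (24,1,2), (24,4,2), (24,5,3),
  (24,8,2), (24,10,1), (24,11,2), (24,14,3), (25,0,2), (25,9,5), (25,12,2), (26,1,2), (26,10,2),
  (26,11,1), (26,14,2), (27,13,2), (28,5,2), (28,6,2), (28,8,2), (28,9,4), (28,11,2), (28,13,2),
  (29,5,4), (29,8,2), (29,10,1), (29,11,2), (29,14,3), (30,9,5), (30,12,2), (31,0,2), (31,1,2),
  (31,4,2), (31,5,3), (31,8,2), (31,11,2), (32,0,2), (32,12,2), (33,0,4), (33,4,2), (33,6,1),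
  (33,7,1), (33,8,2), (33,12,3), (33,14,3), (34,0,2), (34,3,2), (34,5,3), (34,7,2), (34,10,2),
  (35,2,2), (35,3,2), (35,6,2), (35,12,3), (35,13,1), (35,14,2), (36,11,2), (36,13,2), (37,10,2),
  (37,11,2), (37,14,3), (38,12,2), (39,5,4), (39,8,2), (39,11,2), (40,5,2), (40,12,2), (41,8,2),
  (41,12,3), (41,14,3), (42,7,2), (42,10,2), (43,0,4), (43,2,2), (43,4,2), (43,6,2), (43,8,2),
  (43,13,2), (44,0,2), (44,3,2), (44,5,3), (44,7,2), (44,9,2), (44,10,2), (45,4,2), (45,12,3),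
  (45,13,2), (45,14,3), (46,3,2), (46,7,2), (46,12,3), (47,0,2), (47,5,3), (47,9,3), (48,3,2),
  (48,7,2), (48,10,2), (48,14,2), (49,2,2), (49,4,2), (49,6,2), (49,9,6), (49,13,2), (50,11,2),
  (51,9,2), (51,12,2), (52,10,2), (53,6,2), (53,8,2), (53,13,2), (54,7,2), (54,9,2), (54,10,2),
  (55,7,2), (55,12,3), (56,9,3), (57,2,2), (57,4,2), (57,9,4), (57,13,2), (58,4,2), (58,5,2),
  (58,8,2), (58,14,3), (59,3,2), (59,7,2), (59,12,3), (60,0,2), (60,5,3), (60,9,3), (61,3,2),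
  (61,12,3), (62,2,2), (62,6,2), (62,13,1), (62,15,28), (63,2,2), (63,4,2), (63,6,2), (63,8,2),
  (63,11,2), (63,13,2), (64,4,2), (64,8,2), (64,10,2), (64,14,3), (65,12,2), (66,10,2), (68,8,2),
  (68,14,3), (69,7,2), (69,12,3), (70,9,3), (71,6,2), (71,13,1), (72,1,2), (72,4,2), (72,10,1),
  (72,11,2), (72,14,3), (73,3,2), (73,12,3), (74,3,2), (74,5,2), (74,7,2), (74,10,2), (75,2,2),
  (75,6,2), (76,2,2), (76,13,1), (77,1,2), (77,5,4), (77,10,1), (77,11,1), (77,14,3), (78,4,2),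
  (78,8,2), (78,11,2), (79,12,2), (80,3,2), (80,7,2), (80,10,2), (82,7,2), (82,10,2), (83,6,2),
  (84,5,3), (84,10,1), (84,11,1), (84,14,3), (85,2,2), (85,4,2), (85,6,2), (85,12,2), (85,13,2),
  (85,14,3), (86,3,2), (86,9,2), (86,10,2), (87,2,2), (88,2,2), (88,5,2), (88,6,2), (88,9,4),
  (89,1,2), (89,10,1), (90,11,2), (90,14,3), (91,0,2), (91,8,2), (91,14,3), (91,15,3), (92,3,2),
  (92,7,2), (92,10,2), (93,15,16), (94,6,2), (94,9,4), (95,5,3), (95,10,1), (96,7,1), (96,8,1),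
  (96,14,3), (97,3,2), (97,4,2), (97,7,2), (97,8,2), (97,10,2), (97,14,3), (98,3,2), (98,12,3),
  (99,2,2), (100,10,2), (101,1,2), (101,5,4), (102,12,3), (104,5,3), (105,6,1), (105,7,1),
  (105,12,3), (106,14,3), (107,4,2), (107,8,2), (107,11,2), (107,13,2), (108,3,2), (108,7,2),
  (108,10,2), (109,2,2), (109,6,2), (109,9,6), (109,13,1), (111,0,2), (111,2,2), (111,6,2),
  (111,13,1), (112,6,2), (112,13,1), (113,12,3), (114,3,2), (114,7,2), (114,10,2), (114,12,3),
  (115,2,2), (115,6,2), (115,13,1), (116,10,2), (117,0,2), (118,9,4), (118,13,1), (119,5,2),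
  (120,2,2), (120,6,2), (121,11,2), (122,1,2), (122,10,1), (122,11,1), (124,2,2), (124,6,2),
  (124,12,2), (124,13,1), (125,3,2), (125,7,2), (125,10,2), (125,14,2), (126,4,2), (126,8,2),
  (126,11,2), (126,13,2)]

theorem vIndex :
    (Subgroup.closure ({th' 1, th' 2, th' 3, th' 4, th' 5} : Set Theta')).index = 32 := by
  refine index_eq _ [1, 2, 3, 4, 5] _ rfl ?_ ?_ 32 vTab vWords vInit vDed (by norm_num) rfl
    (by decide +kernel) (by decide +kernel) (by decide +kernel) (by decide +kernel)
  · rintro g (rfl | rfl | rfl | rfl | rfl)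
    exacts [⟨1, by simp, rfl⟩, ⟨2, by simp, rfl⟩, ⟨3, by simp, rfl⟩, ⟨4, by simp, rfl⟩,
      ⟨5, by simp, rfl⟩]
  · simp only [List.forall_mem_cons]
    exact ⟨Or.inl rfl, Or.inr (Or.inl rfl), Or.inr (Or.inr (Or.inl rfl)),
      Or.inr (Or.inr (Or.inr (Or.inl rfl))), Or.inr (Or.inr (Or.inr (Or.inr rfl))), by simp⟩

theorem fIndex :
    (Subgroup.closure ({th' 0, th' 1, th' 2, th' 3, th' 4} : Set Theta')).index = 128 := by
  refine index_eq _ [0, 1, 2, 3, 4] _ rfl ?_ ?_ 128 fTab fWords fInit fDed (by norm_num) rfl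
    (by decide +kernel) (by decide +kernel) (by decide +kernel) (by decide +kernel)
  · rintro g (rfl | rfl | rfl | rfl | rfl)
    exacts [⟨0, by simp, rfl⟩, ⟨1, by simp, rfl⟩, ⟨2, by simp, rfl⟩, ⟨3, by simp, rfl⟩,
      ⟨4, by simp, rfl⟩]
  · simp only [List.forall_mem_cons]
    exact ⟨Or.inl rfl, Or.inr (Or.inl rfl), Or.inr (Or.inr (Or.inl rfl)),
      Or.inr (Or.inr (Or.inr (Or.inl rfl))), Or.inr (Or.inr (Or.inr (Or.inr rfl))), by simp⟩

end CosetEnum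

/-- In Theta', the vertex stabiliser <b,...,f> has index 32 and the facet
stabiliser <a,...,e> has index 128. -/
theorem stmt_10 :
    (Subgroup.closure ({th' 1, th' 2, th' 3, th' 4, th' 5} : Set Theta')).index = 32 ∧
    (Subgroup.closure ({th' 0, th' 1, th' 2, th' 3, th' 4} : Set Theta')).index = 128 := 
  ⟨CosetEnum.vIndex, CosetEnum.fIndex⟩
end

section
/- In Theta', the image of the element f*tau*sigma*tau has order 4, and the image of the element f*tau*sigma*tau*sigma also has order 4. (This identifies the vertex figures as tori of type {3,4,3,3}_{(2,2,0,0)}, and shows that the entries with t > 2 in the McMullen–Schulte table of universal polytopes with facets {3,3,4,3}_{(2,0,0,0)} do not arise.) -/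
/-! ### A sound reduction procedure for words in the Coxeter generators -/

/-- Try to rewrite the word `l` as `s :: l'` by braid moves; returns `l'`. -/
def front : ℕ → Fin 6 → List (Fin 6) → Option (List (Fin 6))
  | 0, _, _ => none
  | _ + 1, _, [] => none
  | n + 1, s, t :: u =>
    if s = t then some u else
    match front n s u with
    | none => none
    | some v =>
      if cox6 s t = 2 then some (t :: v) else
      match front n t v with
      | none => none
      | some v' =>
        if cox6 s t = 3 then some (t :: s :: v') else
        match front n s v' with
        | none => none
        | some v'' => if cox6 s t = 4 then some (t :: s :: t :: v'') else none

/-- Reduce a word. -/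
def red : List (Fin 6) → List (Fin 6)
  | [] => []
  | s :: l =>
    match front (red l).length s (red l) with
    | none => s :: red l
    | some v => v

/-- Test equality of two words in the Coxeter group. -/
def chk (u v : List (Fin 6)) : Bool := red (u.reverse ++ v) == []

/-- Evaluation of a word in `Theta'`. -/
def ev (l : List (Fin 6)) : Theta' := (l.map th').prod

theorem ev_nil : ev [] = 1 := rfl

theorem ev_cons (s : Fin 6) (l : List (Fin 6)) : ev (s :: l) = th' s * ev l := by
  simp [ev]

theorem ev_append (u v : List (Fin 6)) : ev (u ++ v) = ev u * ev v := by
  simp [ev]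

theorem th_rel (i j : Fin 6) : (th' i * th' j) ^ cox6 i j = 1 := by
  have h : (w i * w j) ^ cox6 i j = 1 :=
    PresentedGroup.one_of_mem (rels := rels6) (x := (FreeGroup.of i * FreeGroup.of j) ^ cox6 i j)
      ⟨(i, j), rfl⟩
  have h2 := congrArg (QuotientGroup.mk : W → Theta') h
  exact h2

theorem th_sq (i : Fin 6) : th' i * th' i = 1 := by
  have h := th_rel i i
  simpa [cox6] using h

theorem th_inv (i : Fin 6) : (th' i)⁻¹ = th' i := inv_eq_of_mul_eq_one_left (th_sq i)

theorem ev_reverse (u : List (Fin 6)) : ev u.reverse = (ev u)⁻¹ := by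
  induction u with
  | nil => simp [ev]
  | cons s l ih => rw [List.reverse_cons, ev_append, ih, ev_cons, ev_cons, ev_nil, mul_inv_rev,
      th_inv, mul_one]

theorem braid2 (s t : Fin 6) (h : cox6 s t = 2) : th' t * th' s = th' s * th' t := by
  have h1 := th_rel s t
  rw [h, sq] at h1
  have h2 := eq_inv_of_mul_eq_one_left h1
  rw [h2, mul_inv_rev, th_inv, th_inv]

theorem braid3 (s t : Fin 6) (h : cox6 s t = 3) :
    th' t * th' s * th' t = th' s * th' t * th' s := by
  have h1 := th_rel s t
  have h2 : (th' s * th' t * th' s) * (th' t * th' s * th' t) = 1 := by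
    rw [← h1, h]; simp only [pow_succ, pow_zero, one_mul, mul_assoc]
  rw [eq_inv_of_mul_eq_one_left h2]
  simp only [mul_inv_rev, th_inv, mul_assoc]

theorem braid4 (s t : Fin 6) (h : cox6 s t = 4) :
    th' t * th' s * th' t * th' s = th' s * th' t * th' s * th' t := by
  have h1 := th_rel s t
  have h2 : (th' s * th' t * th' s * th' t) * (th' s * th' t * th' s * th' t) = 1 := by
    rw [← h1, h]; simp only [pow_succ, pow_zero, one_mul, mul_assoc]
  rw [eq_inv_of_mul_eq_one_left h2]
  simp only [mul_inv_rev, th_inv, mul_assoc]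

theorem front_sound (n : ℕ) : ∀ (s : Fin 6) (l v : List (Fin 6)),
    front n s l = some v → ev l = th' s * ev v := by
  induction n with
  | zero => intro s l v h; simp [front] at h
  | succ n ih =>
    intro s l v h
    cases l with
    | nil => simp [front] at h
    | cons t u =>
      rw [front] at h
      by_cases h0 : s = t
      · rw [if_pos h0] at h; cases h; rw [h0, ev_cons]
      · rw [if_neg h0] at h
        split at h
        · cases h
        · rename_i v1 e1
          have k1 := ih _ _ _ e1
          by_cases h2 : cox6 s t = 2
          · rw [if_pos h2] at h; cases h
            rw [ev_cons, ev_cons, k1, ← mul_assoc, ← mul_assoc, braid2 s t h2]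
          · rw [if_neg h2] at h
            split at h
            · cases h
            · rename_i v2 e2
              have k2 := ih _ _ _ e2
              by_cases h3 : cox6 s t = 3
              · rw [if_pos h3] at h; cases h
                have := braid3 s t h3
                rw [ev_cons, ev_cons, ev_cons, k1, k2]
                simp only [← mul_assoc]
                rw [this]
              · rw [if_neg h3] at h
                split at h
                · cases h
                · rename_i v3 e3
                  have k3 := ih _ _ _ e3
                  by_cases h4 : cox6 s t = 4
                  · rw [if_pos h4] at h; cases h
                    have := braid4 s t h4
                    rw [ev_cons, ev_cons, ev_cons, ev_cons, k1, k2, k3]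
                    simp only [← mul_assoc]
                    rw [this]
                  · rw [if_neg h4] at h; cases h

theorem red_sound (l : List (Fin 6)) : ev (red l) = ev l := by
  induction l with
  | nil => rfl
  | cons s l ih =>
    rw [red, ev_cons, ← ih]
    split
    · rw [ev_cons]
    · rename_i v hv
      rw [front_sound _ _ _ _ hv, ← mul_assoc, th_sq, one_mul]

theorem chk_sound {u v : List (Fin 6)} (h : chk u v = true) : ev u = ev v := by
  have h1 : red (u.reverse ++ v) = [] := by simpa [chk] using h
  have h2 := red_sound (u.reverse ++ v)
  rw [h1, ev_nil, ev_append, ev_reverse] at h2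
  exact (inv_mul_eq_one.mp h2.symm)

/-! ### The words -/

def rep (n : ℕ) (l : List (Fin 6)) : List (Fin 6) := (List.replicate n l).flatten

def wS : List (Fin 6) := [1, 2, 3, 2, 1]
def wT : List (Fin 6) := [4, 3, 2, 3, 4]
/-- a translation of the facet group -/
def wX : List (Fin 6) := [0] ++ wS ++ wT ++ wS
/-- a translation of the vertex-figure group -/
def wY : List (Fin 6) := [5] ++ wT ++ wS ++ wT
/-- product of two central inversions -/
def wZ : List (Fin 6) := rep 6 [1, 2, 3, 4] ++ rep 4 [0, 1, 2, 3]
/-- the four conjugate translations -/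
def wY2 : List (Fin 6) := wT ++ wY ++ wT
def wY3 : List (Fin 6) := [1] ++ wY2 ++ [1]
def wY4 : List (Fin 6) := [2] ++ wY3 ++ [2]

/-! ### The defining relation and its consequences -/

theorem ev_sg : (QuotientGroup.mk sg : Theta') = ev wS := by
  change th' 1 * th' 2 * th' 3 * th' 2 * th' 1 = _
  simp only [wS, ev_cons, ev_nil, mul_one, mul_assoc]

theorem ev_tu : (QuotientGroup.mk tu : Theta') = ev wT := by
  change th' 4 * th' 3 * th' 2 * th' 3 * th' 4 = _
  simp only [wT, ev_cons, ev_nil, mul_one, mul_assoc]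

theorem ev_single (i : Fin 6) : ev [i] = QuotientGroup.mk (w i) := by
  simp [ev, th']

theorem ev_X_sq : ev wX * ev wX = 1 := by
  have h : (QuotientGroup.mk ((w 0 * sg * tu * sg) ^ 2) : Theta') = 1 :=
    (QuotientGroup.eq_one_iff _).mpr (Subgroup.subset_normalClosure rfl)
  have h2 : ((QuotientGroup.mk (w 0) : Theta') * (QuotientGroup.mk sg : Theta') *
      (QuotientGroup.mk tu : Theta') * (QuotientGroup.mk sg : Theta')) ^ 2 = 1 := h
  rw [ev_sg, ev_tu, ← ev_single] at h2
  have h3 : ev wX = ev [0] * ev wS * ev wT * ev wS := by simp only [wX, ev_append]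
  rw [← h3] at h2
  exact (sq (ev wX)).symm.trans h2

theorem ev_X_inv_sq : (ev wX)⁻¹ * (ev wX)⁻¹ = 1 := by
  rw [← mul_inv_rev, ev_X_sq, inv_one]

theorem ev_single_sq (i : Fin 6) : ev [i] * ev [i] = 1 := by
  rw [ev_single]; exact th_sq i

theorem comm_S : ev wZ * ev wS = ev wS * ev wZ := by
  rw [← ev_append, ← ev_append]; exact chk_sound (by decide +kernel)

theorem comm_b : ev wZ * ev [1] = ev [1] * ev wZ := by
  rw [← ev_append, ← ev_append]; exact chk_sound (by decide +kernel)

theorem comm_c : ev wZ * ev [2] = ev [2] * ev wZ := by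
  rw [← ev_append, ← ev_append]; exact chk_sound (by decide +kernel)

theorem sq_T : ev wT * ev wT = 1 := by
  rw [← ev_append, ← ev_nil]; exact chk_sound (by decide +kernel)

theorem sq_S : ev wS * ev wS = 1 := by
  rw [← ev_append, ← ev_nil]; exact chk_sound (by decide +kernel)

theorem comm_T : ev wZ * ev wT = ev wT * ev wZ := by
  have h : ev (wZ ++ wT) = ev (wS ++ (wX.reverse ++ wX.reverse) ++ wS ++ wT ++ wZ) :=
    chk_sound (by decide +kernel)
  simp only [ev_append, ev_reverse, ev_X_inv_sq, mul_one, sq_S, one_mul] at h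
  exact h

theorem prod_Z : ev wZ * (ev [4] * ev wZ * ev [4]) *
    (ev [3] * (ev [4] * ev wZ * ev [4]) * ev [3]) = 1 := by
  have h : ev (wZ ++ ([4] ++ wZ ++ [4]) ++ ([3] ++ ([4] ++ wZ ++ [4]) ++ [3])) =
      ev ((wX.reverse ++ wX.reverse) ++ ([1] ++ (wX.reverse ++ wX.reverse) ++ [1])) :=
    chk_sound (by decide +kernel)
  simp only [ev_append, ev_reverse, ev_X_inv_sq, mul_one, ev_single_sq] at h
  exact h

theorem inv_Y : ev wZ * ev wY = (ev wY)⁻¹ * ev wZ := by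
  have h1 : ev (wZ ++ [5]) = ev ((wT ++ wS ++ wT) ++ [5] ++ (wT ++ wS ++ wT) ++ wZ) :=
    chk_sound (by decide +kernel)
  have h2 : ev wZ * ev (wT ++ wS ++ wT) = ev (wT ++ wS ++ wT) * ev wZ := by
    rw [ev_append, ev_append]
    exact ((show Commute (ev wZ) (ev wT) from comm_T).mul_right
      (show Commute (ev wZ) (ev wS) from comm_S)).mul_right comm_T
  have h3 : ev (wT ++ wS ++ wT) * ev (wT ++ wS ++ wT) = 1 := by
    rw [← ev_append, ← ev_nil]; exact chk_sound (by decide +kernel)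
  have h4 : ev wY = ev [5] * ev (wT ++ wS ++ wT) := by
    simp only [wY, ev_append, mul_assoc]
  have h5 : (ev wY)⁻¹ = ev (wT ++ wS ++ wT) * ev [5] := by
    rw [h4, mul_inv_rev, inv_eq_of_mul_eq_one_left h3,
      inv_eq_of_mul_eq_one_left (ev_single_sq 5)]
  rw [ev_append, ev_append, ev_append, ev_append (wT ++ wS ++ wT) [5]] at h1
  rw [h5, h4, ← mul_assoc, h1, mul_assoc _ (ev wZ), h2, mul_assoc _ (ev (wT ++ wS ++ wT)),
    ← mul_assoc (ev (wT ++ wS ++ wT)) (ev (wT ++ wS ++ wT)), h3, one_mul]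

/-- Inversion passes to conjugates by involutions commuting with `z`. -/
theorem inv_conj {G : Type*} [Group G] {z y h : G} (hh : h * h = 1) (hz : z * h = h * z)
    (hy : z * y = y⁻¹ * z) : z * (h * y * h) = (h * y * h)⁻¹ * z := by
  have hi : h⁻¹ = h := inv_eq_of_mul_eq_one_left hh
  calc z * (h * y * h) = (z * h) * y * h := by group
    _ = h * (z * y) * h := by rw [hz]; group
    _ = h * y⁻¹ * (z * h) := by rw [hy]; group
    _ = (h * y * h)⁻¹ * z := by rw [hz, mul_inv_rev, mul_inv_rev, hi]; group

theorem inv_Y2 : ev wZ * ev wY2 = (ev wY2)⁻¹ * ev wZ := by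
  rw [wY2, ev_append, ev_append]; exact inv_conj sq_T comm_T inv_Y

theorem inv_Y3 : ev wZ * ev wY3 = (ev wY3)⁻¹ * ev wZ := by
  rw [wY3, ev_append, ev_append]; exact inv_conj (ev_single_sq 1) comm_b inv_Y2

theorem inv_Y4 : ev wZ * ev wY4 = (ev wY4)⁻¹ * ev wZ := by
  rw [wY4, ev_append, ev_append]; exact inv_conj (ev_single_sq 2) comm_c inv_Y3

theorem inv_eYYe : ev wZ * (ev [4] * (ev wY * ev wY) * ev [4]) =
    (ev [4] * (ev wY * ev wY) * ev [4])⁻¹ * ev wZ := by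
  have h1 : ev ([4] ++ (wY ++ wY) ++ [4]) = ev (wY ++ (wY2 ++ (wY3 ++ wY4))) :=
    chk_sound (by decide +kernel)
  have h2 : ev ([4] ++ (wY ++ wY) ++ [4]) = ev (wY4 ++ (wY3 ++ (wY2 ++ wY))) :=
    chk_sound (by decide +kernel)
  simp only [ev_append] at h1 h2
  conv_rhs => rw [h2]
  rw [h1]
  simp only [mul_inv_rev]
  exact ((show SemiconjBy (ev wZ) (ev wY) (ev wY)⁻¹ from inv_Y).mul_right
    ((show SemiconjBy (ev wZ) (ev wY2) (ev wY2)⁻¹ from inv_Y2).mul_right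
      ((show SemiconjBy (ev wZ) (ev wY3) (ev wY3)⁻¹ from inv_Y3).mul_right
        (show SemiconjBy (ev wZ) (ev wY4) (ev wY4)⁻¹ from inv_Y4)))).eq.trans
    (by simp only [mul_assoc])

/-- Abstract end of the argument: three elements with product one all invert `y * y`. -/
theorem final_arg {G : Type*} [Group G] {z y e d : G} (he : e * e = 1) (hd : d * d = 1)
    (hdy : d * y = y * d) (h1 : z * y = y⁻¹ * z)
    (h2 : z * (e * (y * y) * e) = (e * (y * y) * e)⁻¹ * z)
    (h3 : z * (e * z * e) * (d * (e * z * e) * d) = 1) : y ^ 4 = 1 := by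
  have ei : e⁻¹ = e := inv_eq_of_mul_eq_one_left he
  have di : d⁻¹ = d := inv_eq_of_mul_eq_one_left hd
  have k1 : SemiconjBy z (y * y) (y * y)⁻¹ := by
    have : SemiconjBy z y y⁻¹ := h1
    rw [mul_inv_rev]; exact this.mul_right this
  have k2 : SemiconjBy (e * z * e) (y * y) (y * y)⁻¹ := by
    have a1 : SemiconjBy e (y * y) (e * (y * y) * e) := by
      unfold SemiconjBy; rw [mul_assoc _ e e, he, mul_one]
    have a2 : SemiconjBy z (e * (y * y) * e) (e * (y * y) * e)⁻¹ := h2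
    have a3 : SemiconjBy e (e * (y * y) * e)⁻¹ (y * y)⁻¹ := by
      unfold SemiconjBy; rw [mul_inv_rev, mul_inv_rev, ei, ← mul_assoc, he, one_mul]
    exact (a3.mul_left a2).mul_left a1
  have kd : SemiconjBy d (y * y) (y * y) := by
    have : SemiconjBy d y y := hdy
    exact this.mul_right this
  have k3 : SemiconjBy (d * (e * z * e) * d) (y * y) (y * y)⁻¹ :=
    (kd.inv_right.mul_left k2).mul_left kd
  have k2' := k2.inv_right
  have k1' := k1
  rw [inv_inv] at k2'
  have k := (k1'.mul_left k2').mul_left k3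
  rw [h3] at k
  have k4 : y * y = (y * y)⁻¹ := by
    have := k.eq
    rwa [one_mul, mul_one] at this
  calc y ^ 4 = (y * y) * (y * y) := by simp only [pow_succ, pow_zero, one_mul, mul_assoc]
    _ = (y * y)⁻¹ * (y * y) := by rw [← k4]
    _ = 1 := inv_mul_cancel _

theorem Y_pow_four : ev wY ^ 4 = 1 := by
  refine final_arg (ev_single_sq 4) (ev_single_sq 3) ?_ inv_Y inv_eYYe prod_Z
  rw [← ev_append, ← ev_append]; exact chk_sound (by decide +kernel)

theorem YS_sq : (ev wY * ev wS) ^ 2 = ev wY ^ 2 := by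
  have h : ev ((wY ++ wS) ++ (wY ++ wS)) = ev (wY ++ wY) := chk_sound (by decide +kernel)
  simp only [ev_append] at h
  exact (sq _).trans (h.trans (sq _).symm)

/-! ### A permutation representation on 64 points -/

def tab : List (List (Fin 64)) :=
  [[0, 1, 2, 3, 4, 5, 6, 27, 30, 33, 34, 11, 22, 24, 38, 47, 43, 42, 35, 19, 36, 21, 12, 23, 13, 25, 26, 7, 31, 29, 8, 28, 39, 9, 10, 18, 20, 37, 14, 32, 44, 41, 17, 16, 40, 46, 45, 15, 48, 49, 50, 51, 52, 53, 54, 55, 56, 57, 58, 59, 60, 61, 62, 63],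
   [0, 1, 2, 3, 12, 13, 7, 6, 8, 9, 11, 10, 4, 5, 14, 15, 16, 17, 19, 18, 21, 20, 22, 23, 24, 28, 26, 27, 25, 29, 37, 31, 32, 41, 34, 35, 36, 30, 51, 60, 40, 33, 49, 53, 50, 48, 46, 52, 45, 42, 44, 38, 47, 43, 54, 55, 56, 57, 58, 59, 39, 61, 62, 63],
   [0, 1, 2, 4, 3, 5, 6, 8, 7, 10, 9, 11, 12, 14, 13, 15, 16, 18, 17, 19, 20, 23, 22, 21, 38, 25, 26, 30, 32, 29, 27, 39, 28, 34, 33, 42, 36, 37, 24, 31, 45, 41, 35, 43, 46, 40, 44, 47, 48, 49, 50, 51, 54, 55, 52, 53, 56, 57, 58, 59, 60, 61, 62, 63],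
   [0, 1, 3, 2, 5, 4, 6, 7, 9, 8, 10, 11, 13, 12, 15, 14, 17, 16, 20, 21, 18, 19, 24, 26, 22, 25, 23, 27, 28, 29, 33, 31, 40, 30, 34, 36, 35, 41, 47, 44, 32, 37, 43, 42, 39, 45, 46, 38, 48, 53, 60, 52, 51, 49, 57, 56, 55, 54, 59, 58, 50, 61, 63, 62],
   [0, 2, 1, 3, 4, 6, 5, 13, 14, 17, 18, 19, 12, 7, 8, 16, 15, 9, 10, 11, 20, 21, 22, 23, 27, 25, 29, 24, 28, 26, 38, 31, 32, 42, 35, 34, 36, 51, 30, 39, 46, 49, 33, 47, 45, 44, 40, 43, 50, 41, 48, 37, 53, 52, 55, 54, 59, 58, 57, 56, 60, 62, 61, 63],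
   [1, 0, 2, 3, 4, 5, 25, 28, 32, 40, 45, 48, 12, 13, 14, 15, 36, 35, 42, 49, 43, 53, 22, 55, 24, 6, 56, 31, 7, 61, 39, 27, 8, 44, 46, 17, 16, 60, 38, 30, 9, 50, 18, 20, 33, 10, 34, 47, 11, 19, 41, 51, 52, 21, 54, 23, 26, 57, 63, 62, 37, 29, 59, 58]]

def act (i : Fin 6) (x : Fin 64) : Fin 64 := (tab.getD i []).getD x 0

theorem act_inv (i : Fin 6) : Function.Involutive (act i) := by
  have h : ∀ (i : Fin 6) (x : Fin 64), act i (act i x) = x := by decide +kernel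
  exact h i

def perm (i : Fin 6) : Equiv.Perm (Fin 64) := (act_inv i).toPerm

/-- the permutation of a word, as a function -/
def actW : List (Fin 6) → Fin 64 → Fin 64
  | [], x => x
  | i :: l, x => act i (actW l x)

theorem actW_eq (l : List (Fin 6)) (x : Fin 64) : (l.map perm).prod x = actW l x := by
  induction l with
  | nil => rfl
  | cons i l ih => rw [List.map_cons, List.prod_cons, Equiv.Perm.mul_apply, ih]; rfl

theorem perm_rel (i j : Fin 6) : (perm i * perm j) ^ cox6 i j = 1 := by
  have h : ∀ (i j : Fin 6) (x : Fin 64),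
      actW (rep (cox6 i j) [i, j]) x = x := by decide +kernel
  have h2 : ∀ n : ℕ, ((rep n [i, j]).map perm).prod = (perm i * perm j) ^ n := by
    intro n
    induction n with
    | zero => rfl
    | succ n ih =>
      have : rep (n + 1) [i, j] = [i, j] ++ rep n [i, j] := by
        simp [rep, List.replicate_succ]
      rw [this, List.map_append, List.prod_append, ih, pow_succ']
      simp
  ext x
  rw [← h2, actW_eq, h i j x]; rfl

def phiW : W →* Equiv.Perm (Fin 64) :=
  PresentedGroup.toGroup (rels := rels6) (f := perm) (by
    rintro r ⟨⟨i, j⟩, rfl⟩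
    simpa using perm_rel i j)

theorem phiW_w (i : Fin 6) : phiW (w i) = perm i := PresentedGroup.toGroup.of _

theorem phiW_X : phiW ((w 0 * sg * tu * sg) ^ 2) = 1 := by
  have h : phiW ((w 0 * sg * tu * sg) ^ 2) = ((wX ++ wX).map perm).prod := by
    simp only [sq, sg, tu, wX, wS, wT, map_mul, phiW_w, List.map_append, List.map_cons,
      List.map_nil, List.prod_append, List.prod_cons, List.prod_nil, mul_one, mul_assoc]
  have h2 : ∀ x : Fin 64, actW (wX ++ wX) x = x := by decide +kernel
  ext x
  rw [h, actW_eq, h2 x]; rfl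

def phi : Theta' →* Equiv.Perm (Fin 64) :=
  QuotientGroup.lift _ phiW (by
    have : Subgroup.normalClosure ({(w 0 * sg * tu * sg) ^ 2} : Set W) ≤ phiW.ker :=
      Subgroup.normalClosure_le_normal (by
        rintro _ rfl
        exact phiW_X)
    exact this)

theorem phi_ev (l : List (Fin 6)) : phi (ev l) = (l.map perm).prod := by
  rw [ev, map_list_prod, List.map_map]
  have : (phi ∘ th' : Fin 6 → Equiv.Perm (Fin 64)) = perm := funext phiW_w
  rw [this]

theorem Y_sq_ne : ev wY ^ 2 ≠ 1 := by
  intro h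
  have h1 : phi (ev (wY ++ wY)) = 1 := by rw [ev_append, ← sq, h, map_one]
  rw [phi_ev] at h1
  have h2 : ∀ x : Fin 64, actW (wY ++ wY) x = x := fun x => by rw [← actW_eq, h1]; rfl
  exact absurd h2 (by decide +kernel)

/-- In Theta', the images of f τ σ τ and f τ σ τ σ both have order 4,
identifying the vertex figures as {3,4,3,3}_{(2,2,0,0)}. -/
theorem stmt_11 :
    orderOf ((QuotientGroup.mk (w 5 * tu * sg * tu) : Theta')) = 4 ∧
    orderOf ((QuotientGroup.mk (w 5 * tu * sg * tu * sg) : Theta')) = 4 := by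
  have e1 : (QuotientGroup.mk (w 5 * tu * sg * tu) : Theta') = ev wY := by
    rw [QuotientGroup.mk_mul, QuotientGroup.mk_mul, QuotientGroup.mk_mul, ev_sg, ev_tu,
      ← ev_single]
    simp only [wY, ev_append]
  have e2 : (QuotientGroup.mk (w 5 * tu * sg * tu * sg) : Theta') = ev wY * ev wS := by
    rw [QuotientGroup.mk_mul, e1, ev_sg]
  rw [e1, e2]
  constructor
  · exact orderOf_eq_prime_pow (p := 2) (n := 1) (by simpa using Y_sq_ne)
      (by simpa using Y_pow_four)
  · refine orderOf_eq_prime_pow (p := 2) (n := 1) ?_ ?_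
    · rw [pow_one (2 : ℕ), YS_sq]; exact Y_sq_ne
    · have h : (ev wY * ev wS) ^ (2 * 2) = 1 := by
        rw [pow_mul, YS_sq, ← pow_mul]; exact Y_pow_four
      exact h
end

section
/- In the Coxeter group Y_332, the normal closure of the singleton {S} equals the normal closure of {phi(S)}, where S = (a b_1 c_1 a b_2 c_2 a b_3 c_3)^10 and phi is the diagram automorphism exchanging the indices 1 and 2. -/
/-- Coxeter matrix of the diagram Y_332, with generators indexed by Fin 9:
0 = a, 1 = b_1, 2 = b_2, 3 = b_3, 4 = c_1, 5 = c_2, 6 = c_3, 7 = d_1, 8 = d_2.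
Adjacent pairs (bond 3) are {a,b_i} (i=1,2,3), {b_i,c_i} (i=1,2,3), {c_1,d_1}, {c_2,d_2}. -/
def coxY : Fin 9 → Fin 9 → ℕ := fun i j =>
  if i = j then 1
  else if ((i : ℕ), (j : ℕ)) ∈ [(0,1),(0,2),(0,3),(1,4),(2,5),(3,6),(4,7),(5,8)] ∨
          ((j : ℕ), (i : ℕ)) ∈ [(0,1),(0,2),(0,3),(1,4),(2,5),(3,6),(4,7),(5,8)] then 3
  else 2

def relsY : Set (FreeGroup (Fin 9)) :=
  Set.range fun p : Fin 9 × Fin 9 => (FreeGroup.of p.1 * FreeGroup.of p.2) ^ coxY p.1 p.2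

/-- The Coxeter group with diagram Y_332. -/
abbrev Y : Type := PresentedGroup relsY

def y (i : Fin 9) : Y := PresentedGroup.of i

/-- S = (a b_1 c_1 a b_2 c_2 a b_3 c_3)^10. -/
def S : Y := (y 0 * y 1 * y 4 * y 0 * y 2 * y 5 * y 0 * y 3 * y 6) ^ 10

/-- phi(S), where phi is the diagram automorphism of Y_332 exchanging
b_1 ↔ b_2, c_1 ↔ c_2, d_1 ↔ d_2 and fixing a, b_3, c_3; on the word defining S it
gives (a b_2 c_2 a b_1 c_1 a b_3 c_3)^10. -/
def Sphi : Y := (y 0 * y 2 * y 5 * y 0 * y 1 * y 4 * y 0 * y 3 * y 6) ^ 10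

/-- Defining relation of the Coxeter group. -/
theorem y_rel (i j : Fin 9) : (y i * y j) ^ coxY i j = 1 := by
  have h : (FreeGroup.of i * FreeGroup.of j) ^ coxY i j ∈ relsY := ⟨(i, j), rfl⟩
  have := PresentedGroup.one_of_mem h
  simpa [y, PresentedGroup.of] using this

theorem y_sq (i : Fin 9) : y i * y i = 1 := by
  have := y_rel i i
  simpa [coxY] using this

theorem y_inv (i : Fin 9) : (y i)⁻¹ = y i := inv_eq_of_mul_eq_one_left (y_sq i)

theorem y_comm {i j : Fin 9} (h : coxY i j = 2) : y i * y j = y j * y i := by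
  have h1 := y_rel i j
  rw [h, pow_two] at h1
  have h2 := eq_inv_of_mul_eq_one_left h1
  rwa [mul_inv_rev, y_inv, y_inv] at h2

theorem y_braid {i j : Fin 9} (h : coxY i j = 3) : y i * y j * y i = y j * y i * y j := by
  have h1 := y_rel i j
  have h3 : (y i * y j * y i) * (y j * y i * y j) = 1 := by
    rw [← h1, h, pow_three]; simp only [mul_assoc]
  have h2 := eq_inv_of_mul_eq_one_left h3
  simpa only [mul_inv_rev, y_inv, mul_assoc] using h2

/-- Value of a word. -/
def val (l : List (Fin 9)) : Y := (l.map y).prod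

/-- One cancellation, commutation or braid move at the head of the word. -/
def headMove : List (Fin 9) → List (Fin 9)
  | i :: j :: l =>
    if i = j then l
    else if coxY i j = 2 then j :: i :: l
    else match l with
      | k :: l' => if k = i ∧ coxY i j = 3 then j :: i :: j :: l' else i :: j :: k :: l'
      | [] => [i, j]
  | l => l

/-- The same move at position `p`. -/
def move : ℕ → List (Fin 9) → List (Fin 9)
  | 0, l => headMove l
  | _ + 1, [] => []
  | p + 1, i :: l => i :: move p l

theorem val_cons (i : Fin 9) (l : List (Fin 9)) : val (i :: l) = y i * val l := by
  simp [val]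

theorem val_headMove (l : List (Fin 9)) : val (headMove l) = val l := by
  match l with
  | [] => rfl
  | [_] => rfl
  | i :: j :: l =>
    unfold headMove
    dsimp only
    split_ifs with h1 h2
    · subst h1
      rw [val_cons, val_cons, ← mul_assoc, y_sq, one_mul]
    · simp only [val_cons, ← mul_assoc]
      rw [y_comm h2]
    · match l with
      | [] => rfl
      | k :: l' =>
        dsimp only
        split_ifs with h3
        · obtain ⟨rfl, h3⟩ := h3
          simp only [val_cons, ← mul_assoc]
          rw [y_braid h3]
        · rfl

theorem val_move (p : ℕ) (l : List (Fin 9)) : val (move p l) = val l := by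
  induction p generalizing l with
  | zero => exact val_headMove l
  | succ p ih =>
    cases l with
    | nil => rfl
    | cons i l => simp only [move, val_cons, ih]

theorem val_moves (ps : List ℕ) (l : List (Fin 9)) :
    val (ps.foldl (fun w p => move p w) l) = val l := by
  induction ps generalizing l with
  | nil => rfl
  | cons p ps ih => rw [List.foldl_cons, ih, val_move]

/-- Positions of the moves that reduce the word of `g * S⁻¹ * g⁻¹ * Sphi⁻¹` to the empty word. -/
def cert : List ℕ :=
  [
   1, 2, 0, 1, 2, 4, 3, 0, 1, 2, 3, 0, 1, 2, 3, 4, 0, 1, 2, 3, 4, 5, 85, 86, 87, 89, 88,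
   84, 85, 86, 87, 84, 85, 86, 83, 84, 85, 81, 82, 83, 84, 82, 83, 80, 81, 82, 78, 79, 80,
   81, 80, 77, 78, 79, 75, 76, 77, 78, 77, 74, 75, 76, 72, 73, 74, 75, 74, 71, 72, 73, 69,
   70, 71, 72, 71, 68, 69, 70, 66, 67, 68, 69, 68, 65, 66, 67, 63, 64, 65, 66, 65, 62, 63,
   64, 60, 61, 62, 63, 62, 59, 60, 61, 57, 58, 59, 60, 59, 56, 57, 58, 54, 55, 56, 57, 56,
   53, 54, 55, 51, 52, 53, 54, 53, 50, 51, 52, 48, 49, 50, 51, 50, 47, 48, 49, 45, 46, 47,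
   48, 47, 44, 45, 46, 42, 43, 44, 45, 44, 41, 42, 43, 39, 40, 41, 42, 41, 38, 39, 40, 36,
   37, 38, 39, 38, 35, 36, 37, 33, 34, 35, 36, 35, 32, 33, 34, 30, 31, 32, 33, 32, 29, 30,
   31, 27, 28, 29, 30, 29, 26, 27, 28, 24, 25, 26, 27, 26, 23, 24, 25, 21, 22, 23, 24, 23,
   20, 21, 22, 18, 19, 20, 21, 20, 17, 18, 19, 15, 16, 17, 18, 17, 14, 15, 16, 12, 13, 14,
   15, 14, 11, 12, 13, 9, 10, 11, 12, 11, 8, 9, 10, 6, 7, 8, 9, 8, 5, 6, 7, 4, 5, 6, 5, 3,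
   4, 2, 3, 2, 1, 0]

/-- The conjugator. -/
def conjWord : List (Fin 9) := [3, 6, 5, 4, 3]

def invS : List (Fin 9) := (List.replicate 10 [6, 3, 0, 5, 2, 0, 4, 1, 0]).flatten

def invSphi : List (Fin 9) := (List.replicate 10 [6, 3, 0, 4, 1, 0, 5, 2, 0]).flatten

theorem val_append (l m : List (Fin 9)) : val (l ++ m) = val l * val m := by simp [val]

theorem val_reverse (l : List (Fin 9)) : val l.reverse = (val l)⁻¹ := by
  induction l with
  | nil => simp [val]
  | cons i l ih =>
    rw [List.reverse_cons, val_append, ih, val_cons i l, mul_inv_rev, y_inv]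
    simp [val]

theorem val_replicate (n : ℕ) (l : List (Fin 9)) :
    val (List.replicate n l).flatten = val l ^ n := by
  induction n with
  | zero => simp [val]
  | succ n ih => rw [List.replicate_succ, List.flatten_cons, val_append, ih, pow_succ']

theorem val_invS : val invS = S⁻¹ := by
  rw [invS, val_replicate, S, ← inv_pow]
  simp [val, y_inv, mul_assoc]

theorem val_invSphi : val invSphi = Sphi⁻¹ := by
  rw [invSphi, val_replicate, Sphi, ← inv_pow]
  simp [val, y_inv, mul_assoc]

set_option maxRecDepth 100000 in
theorem cert_ok : cert.foldl (fun w p => move p w)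
    (conjWord ++ invS ++ conjWord.reverse ++ invSphi) = [] := by
  decide +kernel

theorem conj_eq : val conjWord * S⁻¹ * (val conjWord)⁻¹ = Sphi := by
  have h := val_moves cert (conjWord ++ invS ++ conjWord.reverse ++ invSphi)
  rw [cert_ok, val_append, val_append, val_append, val_reverse, val_invS, val_invSphi] at h
  exact (mul_inv_eq_one.mp (h.symm.trans (by simp [val])))

/-- The normal closure of {S} equals the normal closure of {phi(S)}. -/
theorem stmt_13 :
    Subgroup.normalClosure ({S} : Set Y) = Subgroup.normalClosure ({Sphi} : Set Y) := by
  apply le_antisymm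
  · apply Subgroup.normalClosure_le_normal
    rw [Set.singleton_subset_iff]
    have h : Sphi ∈ Subgroup.normalClosure ({Sphi} : Set Y) :=
      Subgroup.subset_normalClosure rfl
    have h2 := Subgroup.normalClosure_normal.conj_mem _ (inv_mem h) (val conjWord)⁻¹
    have h3 : (val conjWord)⁻¹ * Sphi⁻¹ * (val conjWord)⁻¹⁻¹ = S := by
      rw [← conj_eq]; group
    rwa [h3] at h2
  · apply Subgroup.normalClosure_le_normal
    rw [Set.singleton_subset_iff]
    have h : S ∈ Subgroup.normalClosure ({S} : Set Y) :=
      Subgroup.subset_normalClosure rfl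
    have h2 := Subgroup.normalClosure_normal.conj_mem _ (inv_mem h) (val conjWord)
    rwa [conj_eq] at h2
end
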